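/- arXiv:1207.1239 — 7 statements merged into one kernel-verified Lean document; each statement's English description precedes it below -/
import Mathlib

section
/- The incidence graph of points and lines of the projective plane ℙ²(𝔽₄) contains no induced cycle of length 14. -/
/-- The field with four elements. -/
abbrev F4 : Type := GaloisField 2 2

/-- The vector space `𝔽₄³`. -/
abbrev V3 : Type := Fin 3 → F4

/-- Points of `ℙ²(𝔽₄)`: 1-dimensional linear subspaces of `𝔽₄³`. -/
abbrev ProjPoint : Type := {P : Submodule F4 V3 // Module.finrank F4 P = 1}

/-- Lines of `ℙ²(𝔽₄)`: 2-dimensional linear subspaces of `𝔽₄³`. -/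
abbrev ProjLine : Type := {L : Submodule F4 V3 // Module.finrank F4 L = 2}

/-- The incidence relation: a point is adjacent to a line iff the point lies on the line. -/
def IncAdj : ProjPoint ⊕ ProjLine → ProjPoint ⊕ ProjLine → Prop
  | Sum.inl p, Sum.inr l => p.1 ≤ l.1
  | Sum.inr l, Sum.inl p => p.1 ≤ l.1
  | _, _ => False

/-- The incidence graph of points and lines of `ℙ²(𝔽₄)`. -/
def IncGraph : SimpleGraph (ProjPoint ⊕ ProjLine) where
  Adj := IncAdj
  symm := by constructor; rintro (p | l) (q | m) h <;> first | exact h.elim | exact h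
  loopless := by constructor; rintro (p | l) h <;> exact h.elim

/-- An induced cycle of length `k` in a simple graph `G`: a `k`-tuple of distinct
vertices, indexed cyclically by `ℤ/kℤ`, with consecutive vertices adjacent and
non-consecutive vertices non-adjacent. -/
def IsInducedCycle {V : Type*} (G : SimpleGraph V) (k : ℕ) (c : ZMod k → V) : Prop :=
  Function.Injective c ∧ ∀ i j : ZMod k, G.Adj (c i) (c j) ↔ (j = i + 1 ∨ i = j + 1)

/-!
Seven alternate vertices of an induced 14-cycle are the corners `pᵢ` of a heptagon whose side `lᵢ`
passes through `pᵢ` and `pᵢ₊₁` and through no other corner. Two consecutive sides meet in a corner,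
which lies on no third side, so three sides can be concurrent only if they are `lᵢ, lᵢ₊₂, lᵢ₊₄` for
some `i`. Let `S ⊆ ℤ/7` be the set of those `i` for which they are.

* A line has only five points, so two of the six sides other than `lᵢ` meet on `lᵢ`. Hence `S` meets
  `{i, i - 2, i - 4}` for every `i`.
* If `i, i + 2 ∈ S`, the two points of concurrency agree, as both lie on `lᵢ₊₂` and `lᵢ₊₄`. This
  point would lie on the consecutive sides `lᵢ₊₆` and `lᵢ`.
* If `i, i + 1 ∈ S`, with points of concurrency `A` and `C`, the sides `lᵢ, lᵢ₊₂, lᵢ₊₄` through `A`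
  and the sides `lᵢ₊₃, lᵢ₊₅` through `C` meet `lᵢ₊₆` in five distinct points, so the line `AC` meets
  `lᵢ₊₆` on one of these sides. That side would then be `AC`, but none of them contains both.

Now `S` is nonempty by the first property, which for `i = j + 6` shows that `j ∈ S` implies
`j + 4 ∈ S`, since the second and third exclude `j + 2` and `j + 6`. So `j ∈ S` implies
`j + 8 = j + 1 ∈ S`, contradicting the third.
-/

open Configuration Module

section Configuration

variable {P L ι : Type*} [Membership P L]

theorem exists_forall_mem_and_mem [HasPoints P L] {l : L} {s : Finset ι} {m : ι → L}
    (hm : ∀ i ∈ s, m i ≠ l) : ∃ meet : ι → P, ∀ i ∈ s, meet i ∈ m i ∧ meet i ∈ l := by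
  have : Nonempty P := (Nondegenerate.exists_point l).nonempty
  choose! meet hmeet using fun i hi ↦
    (HasPoints.existsUnique_point P L (m i) l (hm i hi)).exists
  exact ⟨meet, hmeet⟩

theorem exists_ne_mem_mem_of_pointCount_lt_card [HasPoints P L] [Finite P] {l : L} {s : Finset ι}
    {m : ι → L} (hm : ∀ i ∈ s, m i ≠ l) (hs : pointCount P l < s.card) :
    ∃ i ∈ s, ∃ j ∈ s, i ≠ j ∧ ∃ x ∈ l, x ∈ m i ∧ (x : P) ∈ m j := by
  obtain ⟨meet, hmeet⟩ := exists_forall_mem_and_mem (P := P) hm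
  obtain ⟨i, hi, j, hj, hij, heq⟩ := Set.exists_ne_map_eq_of_ncard_lt_of_maps_to
    (s := (s : Set ι)) (t := {x : P | x ∈ l}) (by rwa [Set.ncard_coe_finset])
    (fun i hi ↦ (hmeet i hi).2)
  exact ⟨i, hi, j, hj, hij, meet i, (hmeet i hi).2, (hmeet i hi).1, heq ▸ (hmeet j hj).1⟩

theorem exists_mem_of_pointCount_le_card [HasPoints P L] [Finite P] {l : L} {s : Finset ι}
    {m : ι → L} (hm : ∀ i ∈ s, m i ≠ l)
    (hdisj : ∀ x ∈ l, ∀ i ∈ s, ∀ j ∈ s, x ∈ m i → (x : P) ∈ m j → i = j)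
    (hs : pointCount P l ≤ s.card) {x : P} (hx : x ∈ l) : ∃ i ∈ s, x ∈ m i := by
  obtain ⟨meet, hmeet⟩ := exists_forall_mem_and_mem (P := P) hm
  have hinj : Set.InjOn meet s := fun i hi j hj heq ↦
    hdisj _ (hmeet i hi).2 i hi j hj (hmeet i hi).1 (heq ▸ (hmeet j hj).1)
  have himage : meet '' s = {x : P | x ∈ l} := by
    refine Set.eq_of_subset_of_ncard_le (Set.image_subset_iff.mpr fun i hi ↦ (hmeet i hi).2) ?_
    rwa [hinj.ncard_image, Set.ncard_coe_finset]
  obtain ⟨i, hi, rfl⟩ := himage.superset hx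
  exact ⟨i, hi, (hmeet i hi).1⟩

end Configuration

/-- An induced `n`-gon in an incidence structure: corners `p i` and sides `l i` indexed by `ℤ/nℤ`,
where the only corners on the side `l j` are its end points `p j` and `p (j + 1)`. -/
def IsInducedPolygon {P L : Type*} [Membership P L] {n : ℕ} (p : ZMod n → P) (l : ZMod n → L) :
    Prop :=
  ∀ i j, p i ∈ l j ↔ i = j ∨ i = j + 1

namespace IsInducedPolygon

variable {P L : Type*} [Membership P L] {n : ℕ} {p : ZMod n → P} {l : ZMod n → L}

theorem side_injective (h : IsInducedPolygon p l) (hn : (2 : ZMod n) ≠ 0) :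
    Function.Injective l := by
  intro i j hij
  have hi : i = j ∨ i = j + 1 := (h i j).mp (hij ▸ (h i i).mpr (.inl rfl))
  have hi' : i + 1 = j ∨ i + 1 = j + 1 :=
    (h (i + 1) j).mp (hij ▸ (h (i + 1) i).mpr (.inr rfl))
  grind

theorem eq_or_eq_of_mem_of_mem_add_one [Nondegenerate P L] (h : IsInducedPolygon p l)
    (hn : (2 : ZMod n) ≠ 0) {x : P} {i j : ZMod n} (hi : x ∈ l i) (hi' : x ∈ l (i + 1))
    (hj : x ∈ l j) : j = i ∨ j = i + 1 := by
  have hsides : l i ≠ l (i + 1) :=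
    (h.side_injective hn).ne fun heq ↦ hn (by linear_combination -2 * heq)
  obtain rfl : x = p (i + 1) :=
    (Nondegenerate.eq_or_eq hi ((h _ _).mpr (.inr rfl)) hi' ((h _ _).mpr (.inl rfl))).resolve_right
      hsides
  exact ((h (i + 1) j).mp hj).symm.imp (fun heq ↦ (add_right_cancel heq).symm) Eq.symm

theorem add_one_notMem_of_two_lt_card [Nondegenerate P L] (h : IsInducedPolygon p l)
    (hn : (2 : ZMod n) ≠ 0) {x : P} {s : Finset (ZMod n)} (hx : ∀ a ∈ s, x ∈ l a)
    (hs : 2 < s.card) : ∀ a ∈ s, a + 1 ∉ s := by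
  intro a ha ha'
  have hsub : s ⊆ {a, a + 1} := fun b hb ↦ by
    simpa using h.eq_or_eq_of_mem_of_mem_add_one hn (hx a ha) (hx _ ha') (hx b hb)
  exact hs.not_ge ((Finset.card_le_card hsub).trans Finset.card_le_two)

end IsInducedPolygon

/-- The triple `{i, i + 2, i + 4}` in `ℤ/7ℤ`. These triples are the maximal sets without cyclically
consecutive elements, and so index the sets of three sides of a heptagon that can be concurrent. -/
def alternateTriple (i : ZMod 7) : Finset (ZMod 7) := {i, i + 2, i + 4}

theorem mem_alternateTriple {i j : ZMod 7} :
    j ∈ alternateTriple i ↔ j = i ∨ j = i + 2 ∨ j = i + 4 := by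
  simp [alternateTriple]

theorem card_alternateTriple (i : ZMod 7) : (alternateTriple i).card = 3 := by
  decide +revert

theorem mem_alternateTriple_or_mem_alternateTriple_add_one {i j : ZMod 7} (h : j ≠ i + 6) :
    j ∈ alternateTriple i ∨ j ∈ alternateTriple (i + 1) := by
  decide +revert

theorem exists_eq_alternateTriple {s : Finset (ZMod 7)} (hcard : s.card = 3)
    (hs : ∀ a ∈ s, a + 1 ∉ s) : ∃ i, s = alternateTriple i := by
  decide +kernel +revert

theorem mem_alternateTriple_of_forall_add_one_notMem {i j : ZMod 7}
    (h : ∀ a ∈ insert j (alternateTriple i), a + 1 ∉ insert j (alternateTriple i)) :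
    j ∈ alternateTriple i := by
  decide +revert

/-- The sides `l i`, `l (i + 2)` and `l (i + 4)` of a heptagon pass through a common point. -/
def AlternateSidesConcurrent (P : Type*) {L : Type*} [Membership P L] (l : ZMod 7 → L)
    (i : ZMod 7) : Prop :=
  ∃ x : P, ∀ a ∈ alternateTriple i, x ∈ l a

namespace IsInducedPolygon

variable {P L : Type*} [Membership P L] {p : ZMod 7 → P} {l : ZMod 7 → L}

theorem exists_eq_alternateTriple_of_mem [Nondegenerate P L] (h : IsInducedPolygon p l) {x : P}
    {s : Finset (ZMod 7)} (hx : ∀ a ∈ s, x ∈ l a) (hs : s.card = 3) :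
    ∃ i, s = alternateTriple i :=
  exists_eq_alternateTriple hs (h.add_one_notMem_of_two_lt_card (by decide) hx (by simp [hs]))

theorem mem_side_iff [Nondegenerate P L] (h : IsInducedPolygon p l) {x : P} {i j : ZMod 7}
    (hx : ∀ a ∈ alternateTriple i, x ∈ l a) : x ∈ l j ↔ j ∈ alternateTriple i := by
  refine ⟨fun hj ↦ ?_, hx j⟩
  have hx' : ∀ a ∈ insert j (alternateTriple i), x ∈ l a := by
    simpa only [Finset.forall_mem_insert] using ⟨hj, hx⟩
  have hcard : 2 < (insert j (alternateTriple i)).card :=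
    (card_alternateTriple i).ge.trans (Finset.card_le_card (Finset.subset_insert _ _))
  exact mem_alternateTriple_of_forall_add_one_notMem
    (h.add_one_notMem_of_two_lt_card (by decide) hx' hcard)

theorem exists_alternateSidesConcurrent [HasPoints P L] [Finite P] (h : IsInducedPolygon p l)
    {i : ZMod 7} (hcount : pointCount P (l i) ≤ 5) :
    ∃ j, i ∈ alternateTriple j ∧ AlternateSidesConcurrent P l j := by
  obtain ⟨j, hj, k, hk, hjk, x, hxi, hxj, hxk⟩ :=
    exists_ne_mem_mem_of_pointCount_lt_card (s := Finset.univ.erase i) (m := l) (P := P)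
      (fun j hj ↦ (h.side_injective (by decide)).ne (Finset.ne_of_mem_erase hj))
      (hcount.trans_lt (by simp [ZMod.card]))
  have hx : ∀ a ∈ ({i, j, k} : Finset (ZMod 7)), x ∈ l a := by simp [hxi, hxj, hxk]
  have hcard : ({i, j, k} : Finset (ZMod 7)).card = 3 :=
    Finset.card_eq_three.mpr ⟨i, j, k, (Finset.ne_of_mem_erase hj).symm,
      (Finset.ne_of_mem_erase hk).symm, hjk, rfl⟩
  obtain ⟨s, hs⟩ := h.exists_eq_alternateTriple_of_mem hx hcard
  exact ⟨s, hs ▸ Finset.mem_insert_self i _, x, hs ▸ hx⟩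

theorem not_alternateSidesConcurrent_add_two [Nondegenerate P L] (h : IsInducedPolygon p l)
    {i : ZMod 7} (hi : AlternateSidesConcurrent P l i) :
    ¬ AlternateSidesConcurrent P l (i + 2) := by
  rintro ⟨y, hy⟩
  obtain ⟨x, hx⟩ := hi
  obtain rfl : x = y :=
    (Nondegenerate.eq_or_eq (hx (i + 2) (by grind [mem_alternateTriple]))
      (hy (i + 2) (by grind [mem_alternateTriple])) (hx (i + 4) (by grind [mem_alternateTriple]))
      (hy (i + 4) (by grind [mem_alternateTriple]))).resolve_right
      ((h.side_injective (by decide)).ne (by grind))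
  have hmem : i + 6 ∈ alternateTriple i :=
    (h.mem_side_iff hx).mp (hy (i + 6) (by grind [mem_alternateTriple]))
  grind [mem_alternateTriple]

theorem exists_ne_mem_side_of_mem_side_add_six [HasPoints P L] [Finite P]
    (h : IsInducedPolygon p l) {i : ZMod 7} (hi : AlternateSidesConcurrent P l i)
    (hcount : pointCount P (l (i + 6)) ≤ 5) {x : P} (hx : x ∈ l (i + 6)) :
    ∃ j ≠ i + 6, x ∈ l j := by
  let s : Finset (ZMod 7) := {i + 1, i + 6}ᶜ
  have hmem_s {j : ZMod 7} : j ∈ s ↔ j ≠ i + 1 ∧ j ≠ i + 6 := by simp [s]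
  have hcard : s.card = 5 := by
    rw [Finset.card_compl, Finset.card_pair (by grind), ZMod.card]
  have hdisj : ∀ y ∈ l (i + 6), ∀ j ∈ s, ∀ k ∈ s, y ∈ l j → (y : P) ∈ l k → j = k := by
    intro y hy j hj k hk hyj hyk
    by_contra hjk
    rw [hmem_s] at hj hk
    have hy' : ∀ a ∈ ({i + 6, j, k} : Finset (ZMod 7)), y ∈ l a := by simp [hy, hyj, hyk]
    obtain ⟨t, ht⟩ := h.exists_eq_alternateTriple_of_mem hy'
      (Finset.card_eq_three.mpr ⟨i + 6, j, k, hj.2.symm, hk.2.symm, hjk, rfl⟩)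
    have hmem : i + 6 ∈ alternateTriple t := ht ▸ Finset.mem_insert_self _ _
    have hnotMem : i + 1 ∉ alternateTriple t := by
      rw [← ht]
      grind
    obtain rfl : t = i + 2 := by grind [mem_alternateTriple]
    exact h.not_alternateSidesConcurrent_add_two hi ⟨y, fun a ha ↦ hy' a (ht.symm ▸ ha)⟩
  obtain ⟨j, hj, hxj⟩ := exists_mem_of_pointCount_le_card (m := l)
    (fun j hj ↦ (h.side_injective (by decide)).ne (hmem_s.mp hj).2) hdisj (hcount.trans hcard.ge) hx
  exact ⟨j, (hmem_s.mp hj).2, hxj⟩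

theorem not_alternateSidesConcurrent_add_one [HasPoints P L] [HasLines P L] [Finite P]
    (h : IsInducedPolygon p l) {i : ZMod 7} (hcount : pointCount P (l (i + 6)) ≤ 5)
    (hi : AlternateSidesConcurrent P l i) : ¬ AlternateSidesConcurrent P l (i + 1) := by
  rintro ⟨C, hC⟩
  have ⟨A, hA⟩ := hi
  have mem_iff_A {j : ZMod 7} : A ∈ l j ↔ j ∈ alternateTriple i := h.mem_side_iff hA
  have mem_iff_C {j : ZMod 7} : C ∈ l j ↔ j ∈ alternateTriple (i + 1) := h.mem_side_iff hC
  have hA₆ : A ∉ l (i + 6) := by grind [mem_alternateTriple]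
  have hC₆ : C ∉ l (i + 6) := by grind [mem_alternateTriple]
  have hCi : C ∉ l i := by grind [mem_alternateTriple]
  have hAC : A ≠ C := fun heq ↦ hCi (heq ▸ hA i (by grind [mem_alternateTriple]))
  obtain ⟨m, ⟨hAm, hCm⟩, -⟩ := HasLines.existsUnique_line P L A C hAC
  obtain ⟨D, ⟨hDm, hD₆⟩, -⟩ := HasPoints.existsUnique_point P L m (l (i + 6))
    (fun heq ↦ hA₆ (heq ▸ hAm))
  obtain ⟨j, hj₆, hDj⟩ := h.exists_ne_mem_side_of_mem_side_add_six hi hcount hD₆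
  have hAj_or_hCj : A ∈ l j ∨ C ∈ l j := by
    rw [mem_iff_A, mem_iff_C]
    exact mem_alternateTriple_or_mem_alternateTriple_add_one hj₆
  have hlj : l j = m := by
    rcases hAj_or_hCj with hAj | hCj
    · exact (Nondegenerate.eq_or_eq hAj hDj hAm hDm).resolve_left fun heq ↦ hA₆ (heq ▸ hD₆)
    · exact (Nondegenerate.eq_or_eq hCj hDj hCm hDm).resolve_left fun heq ↦ hC₆ (heq ▸ hD₆)
  have hjA : j ∈ alternateTriple i := mem_iff_A.mp (hlj ▸ hAm)
  have hjC : j ∈ alternateTriple (i + 1) := mem_iff_C.mp (hlj ▸ hCm)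
  grind [mem_alternateTriple]

theorem exists_five_lt_pointCount [HasPoints P L] [HasLines P L] [Finite P]
    (h : IsInducedPolygon p l) : ∃ i, 5 < pointCount P (l i) := by
  by_contra! hcount
  have add_four {j : ZMod 7} (hj : AlternateSidesConcurrent P l j) :
      AlternateSidesConcurrent P l (j + 4) := by
    obtain ⟨k, hk, hkconc⟩ := h.exists_alternateSidesConcurrent (hcount (j + 6))
    have hk₂ : k ≠ j + 2 := fun heq ↦ h.not_alternateSidesConcurrent_add_two hj (heq ▸ hkconc)
    have hk₆ : j ≠ k + 1 := fun heq ↦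
      h.not_alternateSidesConcurrent_add_one (hcount _) hkconc (heq ▸ hj)
    obtain rfl : k = j + 4 := by grind [mem_alternateTriple]
    exact hkconc
  obtain ⟨j, -, hj⟩ := h.exists_alternateSidesConcurrent (hcount 0)
  have hj₈ := add_four (add_four hj)
  rw [show j + 4 + 4 = j + 1 by grind] at hj₈
  exact h.not_alternateSidesConcurrent_add_one (hcount _) hj hj₈

end IsInducedPolygon

section IncidenceGraph

variable {P L : Type*} [Membership P L]

/-- The incidence graph of an incidence structure, in which a point is adjacent to the lines
through it. -/
def incidenceGraph (P L : Type*) [Membership P L] : SimpleGraph (P ⊕ L) where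
  Adj
    | .inl p, .inr l => p ∈ l
    | .inr l, .inl p => p ∈ l
    | _, _ => False
  symm := ⟨by rintro (p | l) (q | m) h <;> exact h⟩
  loopless := ⟨by rintro (p | l) h <;> exact h⟩

theorem IsInducedCycle.isLeft_add_one {n : ℕ} {c : ZMod n → P ⊕ L}
    (hc : IsInducedCycle (incidenceGraph P L) n c) (i : ZMod n) :
    (c (i + 1)).isLeft = !(c i).isLeft := by
  have hadj := (hc.2 i (i + 1)).mpr (.inl rfl)
  revert hadj
  cases c i <;> cases c (i + 1) <;> simp [incidenceGraph]

theorem IsInducedCycle.isLeft_add_two_mul {n : ℕ} {c : ZMod n → P ⊕ L}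
    (hc : IsInducedCycle (incidenceGraph P L) n c) (i : ZMod n) (k : ℤ) :
    (c (i + 2 * k)).isLeft = (c i).isLeft := by
  have add_two (j : ZMod n) : (c (j + 2)).isLeft = (c j).isLeft := by
    rw [← one_add_one_eq_two, ← add_assoc, hc.isLeft_add_one, hc.isLeft_add_one, Bool.not_not]
  induction k using Int.induction_on with
  | zero => simp
  | succ k ih => rw [← ih, ← add_two (i + 2 * (k : ℤ))]; push_cast; ring_nf
  | pred k ih => rw [← ih, ← add_two]; push_cast; ring_nf

theorem two_mul_intCast_zmod_eq_iff {n : ℕ} {a b : ℤ} :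
    (2 * a : ZMod (2 * n)) = 2 * b ↔ (a : ZMod n) = b := by
  have h := ZMod.intCast_eq_intCast_iff (2 * a) (2 * b) (2 * n)
  push_cast at h
  rw [h, ZMod.intCast_eq_intCast_iff, Int.ModEq.mul_left_cancel_iff' two_ne_zero]

theorem IsInducedCycle.exists_isInducedPolygon {n : ℕ} {c : ZMod (2 * n) → P ⊕ L}
    (hc : IsInducedCycle (incidenceGraph P L) (2 * n) c) :
    ∃ (p : ZMod n → P) (l : ZMod n → L), IsInducedPolygon p l := by
  obtain ⟨a, ha⟩ : ∃ a, (c a).isLeft := by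
    by_contra! hne
    simpa [hne] using hc.isLeft_add_one 0
  have hpoint (k : ℤ) : ∃ p, c (a + 2 * k) = .inl p :=
    Sum.isLeft_iff.mp (by rw [hc.isLeft_add_two_mul, ha])
  have hline (k : ℤ) : ∃ l, c (a + 2 * k + 1) = .inr l :=
    Sum.isRight_iff.mp (by simp [← Sum.not_isLeft, hc.isLeft_add_one, hc.isLeft_add_two_mul, ha])
  choose p hp using hpoint
  choose l hl using hline
  refine ⟨fun i ↦ p i.cast, fun i ↦ l i.cast, fun i j ↦ ?_⟩
  have hadj := hc.2 (a + 2 * (i.cast : ℤ)) (a + 2 * (j.cast : ℤ) + 1)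
  rw [hp, hl] at hadj
  have hsucc : a + 2 * (j.cast : ℤ) + 1 + 1 = a + 2 * (j.cast + 1 : ℤ) := by
    push_cast
    ring
  refine hadj.trans ?_
  rw [hsucc, add_left_inj, add_right_inj, add_right_inj, two_mul_intCast_zmod_eq_iff,
    two_mul_intCast_zmod_eq_iff]
  simp [eq_comm]

theorem no_induced_cycle_of_length_14_general [HasPoints P L] [HasLines P L] [Finite P]
    (hcount : ∀ l : L, pointCount P l ≤ 5) :
    ¬ ∃ c : ZMod 14 → P ⊕ L, IsInducedCycle (incidenceGraph P L) 14 c := by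
  rintro ⟨c, hc⟩
  obtain ⟨p, l, h⟩ := IsInducedCycle.exists_isInducedPolygon (n := 7) hc
  obtain ⟨i, hi⟩ := h.exists_five_lt_pointCount
  exact hi.not_ge (hcount (l i))

end IncidenceGraph

section Subspaces

variable {K V : Type*} [DivisionRing K] [AddCommGroup V] [Module K V]

/-- The incidence relation of the projective geometry of `V`, whose points and lines are the one-
and two-dimensional subspaces: a point lies on the lines containing it. -/
instance subspaceMembership :
    Membership {W : Submodule K V // finrank K W = 1} {W : Submodule K V // finrank K W = 2} :=
  ⟨fun l p ↦ p.1 ≤ l.1⟩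

theorem finrank_sup_eq_two {P Q : Submodule K V} (hP : finrank K P = 1) (hQ : finrank K Q = 1)
    (hne : P ≠ Q) : finrank K ↥(P ⊔ Q) = 2 := by
  have := FiniteDimensional.of_finrank_pos (hP ▸ one_pos)
  have := FiniteDimensional.of_finrank_pos (hQ ▸ one_pos)
  have hlt : P < P ⊔ Q := left_lt_sup.mpr fun hle ↦
    hne (Submodule.eq_of_le_of_finrank_eq hle (hQ.trans hP.symm)).symm
  have hlt' := Submodule.finrank_lt_finrank_of_lt hlt
  have hadd := Submodule.finrank_add_le_finrank_add_finrank P Q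
  lia

theorem finrank_inf_eq_one (hV : finrank K V = 3) {L M : Submodule K V} (hL : finrank K L = 2)
    (hM : finrank K M = 2) (hne : L ≠ M) : finrank K ↥(L ⊓ M) = 1 := by
  have := FiniteDimensional.of_finrank_pos (hV ▸ three_pos)
  have hlt : L ⊓ M < L := inf_lt_left.mpr fun hle ↦
    hne (Submodule.eq_of_le_of_finrank_eq hle (hL.trans hM.symm))
  have hlt' := Submodule.finrank_lt_finrank_of_lt hlt
  have hsup := Submodule.finrank_le (L ⊔ M)
  have hadd := Submodule.finrank_sup_add_finrank_inf_eq L M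
  lia

theorem nondegenerate_subspaces (hV : finrank K V = 3) :
    Nondegenerate {W : Submodule K V // finrank K W = 1}
      {W : Submodule K V // finrank K W = 2} where
  exists_point := by
    rintro ⟨l, hl⟩
    obtain ⟨v, hv⟩ : ∃ v, v ∉ l := by
      by_contra! hall
      rw [Submodule.eq_top_iff'.mpr hall, finrank_top] at hl
      lia
    refine ⟨⟨K ∙ v, finrank_span_singleton fun h0 ↦ hv (h0 ▸ l.zero_mem)⟩, fun hle ↦ hv ?_⟩
    exact hle (Submodule.mem_span_singleton_self v)
  exists_line := by
    rintro ⟨p, hp⟩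
    have := FiniteDimensional.of_finrank_pos (hV ▸ three_pos)
    obtain ⟨l, hl⟩ := p.exists_isCompl
    refine ⟨⟨l, by have := Submodule.finrank_add_eq_of_isCompl hl; lia⟩, fun hle ↦ ?_⟩
    have hbot : p = ⊥ := hl.disjoint.eq_bot_of_le hle
    rw [hbot, finrank_bot] at hp
    exact zero_ne_one hp
  eq_or_eq := by
    intro p q l m hpl hql hpm hqm
    refine or_iff_not_imp_left.mpr fun hne ↦ Subtype.ext ?_
    have := FiniteDimensional.of_finrank_pos (hV ▸ three_pos)
    have hsup : finrank K ↥(p.1 ⊔ q.1) = 2 :=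
      finrank_sup_eq_two p.2 q.2 (Subtype.coe_ne_coe.mpr hne)
    have eq_sup {n : {W : Submodule K V // finrank K W = 2}} (hp : p ∈ n) (hq : q ∈ n) :
        p.1 ⊔ q.1 = n.1 :=
      Submodule.eq_of_le_of_finrank_eq (sup_le hp hq) (hsup.trans n.2.symm)
    rw [← eq_sup hpl hql, eq_sup hpm hqm]

/-- In the projective plane of a three-dimensional space, two lines meet in their intersection. -/
@[reducible]
def hasPointsSubspaces (hV : finrank K V = 3) :
    HasPoints {W : Submodule K V // finrank K W = 1} {W : Submodule K V // finrank K W = 2} where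
  toNondegenerate := nondegenerate_subspaces hV
  mkPoint {l m} hne := ⟨l.1 ⊓ m.1, finrank_inf_eq_one hV l.2 m.2 (Subtype.coe_ne_coe.mpr hne)⟩
  mkPoint_ax _ := ⟨inf_le_left, inf_le_right⟩

/-- In the projective plane of a three-dimensional space, two points are joined by their sum. -/
@[reducible]
def hasLinesSubspaces (hV : finrank K V = 3) :
    HasLines {W : Submodule K V // finrank K W = 1} {W : Submodule K V // finrank K W = 2} where
  toNondegenerate := nondegenerate_subspaces hV
  mkLine {p q} hne := ⟨p.1 ⊔ q.1, finrank_sup_eq_two p.2 q.2 (Subtype.coe_ne_coe.mpr hne)⟩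
  mkLine_ax _ := ⟨le_sup_left, le_sup_right⟩

theorem pointCount_subspaces [Finite K] (l : {W : Submodule K V // finrank K W = 2}) :
    pointCount {W : Submodule K V // finrank K W = 1} l = Nat.card K + 1 := by
  calc
    _ = Nat.card {W : Set.Iic l.1 // finrank K W.1 = 1} :=
      Nat.card_congr ⟨fun p ↦ ⟨⟨p.1.1, p.2⟩, p.1.2⟩, fun W ↦ ⟨⟨W.1.1, W.2⟩, W.1.2⟩,
        fun _ ↦ rfl, fun _ ↦ rfl⟩
    _ = Nat.card {W : Submodule K l.1 // finrank K W = 1} :=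
      .symm <| Nat.card_congr <| l.1.mapIic.toEquiv.subtypeEquiv fun W ↦
        Eq.congr_left (l.1.equivSubtypeMap W).finrank_eq
    _ = Nat.card (Projectivization K l.1) :=
      Nat.card_congr (Projectivization.equivSubmodule K l.1).symm
    _ = Nat.card K + 1 := Projectivization.card_of_finrank_two K l.1 l.2

theorem not_exists_isInducedCycle_subspaces [Finite K] (hV : finrank K V = 3)
    (hK : Nat.card K ≤ 4) :
    ¬ ∃ c : ZMod 14 →
        {W : Submodule K V // finrank K W = 1} ⊕ {W : Submodule K V // finrank K W = 2},
      IsInducedCycle (incidenceGraph _ _) 14 c := by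
  let := hasPointsSubspaces hV
  let := hasLinesSubspaces hV
  have := FiniteDimensional.of_finrank_pos (hV ▸ three_pos)
  have := Module.finite_of_finite K (M := V)
  refine no_induced_cycle_of_length_14_general fun l ↦ ?_
  rw [pointCount_subspaces]
  lia

end Subspaces

theorem incGraph_eq_incidenceGraph : IncGraph = incidenceGraph ProjPoint ProjLine := by
  ext (p | l) (q | m) <;> rfl

/-- The incidence graph of points and lines of `ℙ²(𝔽₄)` contains no induced cycle
of length 14. -/
theorem no_induced_cycle_of_length_14 :
    ¬ ∃ c : ZMod 14 → (ProjPoint ⊕ ProjLine), IsInducedCycle IncGraph 14 c := by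
  rw [incGraph_eq_incidenceGraph]
  exact not_exists_isInducedCycle_subspaces (finrank_fin_fun F4)
    (GaloisField.card 2 2 two_ne_zero).le
end

section
/- For every integer n ≥ 10, the incidence graph of points and lines of the projective plane ℙ²(𝔽₄) contains no induced cycle of length 2n. -/
/-!
An induced cycle of length `2n` in the incidence graph is an `n`-gon in the plane whose sides
contain none of its vertices other than their endpoints. Over `𝔽₄` the cube `(l ⬝ p)³` is `0` or `1`
according to whether the point `p` lies on the line `l`, and it equals the dot product of `l ⊗ l²`
and `p ⊗ p²` in a space of dimension nine. A linear relation `x` among the nine-dimensional vectors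
of the vertices therefore satisfies `xᵢ + xᵢ₊₁ = ∑ⱼ xⱼ` for all `i`, so it is two-periodic. Hence
`n ≤ 9 + 2`, and for odd `n` there are no nonzero relations, so `n ≤ 9`.

If `n = 10`, then either the vectors of the sides span, in which case every two-periodic sequence is
a relation among the vertices, or they span a proper subspace, in which case every two-periodic
sequence is a relation among the sides by counting dimensions. Up to duality, the vectors of the
even vertices sum to zero, and so do those of the odd ones. Since five is odd, each of these two
sets meets every line. But a set of five points that meets every line is a line, and two lines are
never disjoint.
-/

namespace PlaneOfOrderFour

open Finset Function Matrix Module Projectivization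
open Configuration Configuration.ProjectivePlane
open scoped LinearAlgebra.Projectivization

section Periodic

variable {n : ℕ} {α : Type*} {x y : ZMod n → α}

theorem periodic_one_of_periodic_two_of_odd (hn : Odd n) (hx : Periodic x 2) : Periodic x 1 := by
  obtain ⟨k, rfl⟩ := hn
  have two_generates : ((k + 1 : ℕ) : ZMod (2 * k + 1)) * 2 = 1 := by
    have := ZMod.natCast_self (2 * k + 1)
    push_cast at this ⊢
    linear_combination this
  exact two_generates ▸ hx.nat_mul (k + 1)

variable [NeZero n]

theorem periodic_two_ext (hx : Periodic x 2) (hy : Periodic y 2) (h0 : x 0 = y 0)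
    (h1 : x 1 = y 1) : x = y := by
  have apply_natCast {z : ZMod n → α} (hz : Periodic z 2) (k : ℕ) :
      z k = if Even k then z 0 else z 1 := by
    induction k using Nat.twoStepInduction with
    | zero => simp
    | one => simp
    | more k ih _ => simpa [Nat.even_add, hz (k : ZMod n)] using ih
  funext i
  rw [← ZMod.natCast_zmod_val i, apply_natCast hx, apply_natCast hy, h0, h1]

theorem apply_eq_apply_zero_of_periodic_one (hx : Periodic x 1) (i : ZMod n) : x i = x 0 := by
  simpa using hx.nat_mul_eq i.val

theorem sum_eq_mul_of_periodic_two {R : Type*} [CommRing R] {m : ℕ} [NeZero (2 * m)]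
    {x : ZMod (2 * m) → R} (hx : Periodic x 2) : ∑ i, x i = m * (x 0 + x 1) := by
  have sum_range (k : ℕ) : ∑ i ∈ range (2 * k), x i = k * (x 0 + x 1) := by
    induction k with
    | zero => simp
    | succ k ih =>
      have h0 : x (2 * k) = x 0 := by simpa [mul_comm] using hx.nat_mul_eq k
      have h1 : x (2 * k + 1) = x 1 := by simpa [mul_comm, add_comm] using hx.nat_mul k 1
      rw [mul_add_one, sum_range_succ, sum_range_succ, ih]
      push_cast
      rw [h0, h1]
      ring
  rw [← sum_range]
  exact sum_nbij' ZMod.val (↑) (by simp [ZMod.val_lt]) (by simp) (by simp)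
    (by simpa using fun i hi => ZMod.val_cast_of_lt hi) (by simp)

end Periodic

section CycleGram

variable {F : Type*} [Field F] {ι : Type*} [Fintype ι] {n : ℕ}

/-- The Gram matrix of the two families is the complement of the point-line incidence matrix of
an `n`-gon, where side `i` contains the vertices `i` and `i + 1`. -/
def HasCycleGram (a b : ZMod n → ι → F) : Prop :=
  ∀ i j, a i ⬝ᵥ b j = if j = i ∨ j = i + 1 then 0 else 1

/-- The space of two-periodic sequences, which turns out to contain all linear relations
within a family with a cycle Gram matrix. -/
def periodTwo (F : Type*) [Field F] (n : ℕ) : Submodule F (ZMod n → F) where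
  carrier := {x | Periodic x 2}
  add_mem' hx hy := hx.add hy
  zero_mem' _ := rfl
  smul_mem' c _ hx := hx.smul c

theorem finrank_periodTwo_le [NeZero n] : finrank F (periodTwo F n) ≤ 2 := by
  let initial : periodTwo F n →ₗ[F] F × F :=
    ((LinearMap.proj 0).prod (LinearMap.proj 1)).comp (periodTwo F n).subtype
  have initial_injective : Injective initial := fun x y hxy =>
    Subtype.ext <| periodic_two_ext x.2 y.2 (congrArg Prod.fst hxy) (congrArg Prod.snd hxy)
  simpa using LinearMap.finrank_le_finrank_of_injective initial_injective

namespace HasCycleGram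

variable [NeZero n] {a b : ZMod n → ι → F}

theorem dotProduct_sum_smul (h : HasCycleGram a b) (hn : n ≠ 1) (x : ZMod n → F) (i : ZMod n) :
    a i ⬝ᵥ ∑ j, x j • b j = ∑ j, x j - (x i + x (i + 1)) := by
  have : Nontrivial (ZMod n) := ZMod.nontrivial_iff.2 hn
  have term (j : ZMod n) : a i ⬝ᵥ (x j • b j) =
      x j - ((if j = i then x j else 0) + if j = i + 1 then x j else 0) := by
    rw [dotProduct_smul, h i j]
    by_cases hi : j = i <;> by_cases hi' : j = i + 1 <;> simp_all
  simp [dotProduct_sum, term, sum_add_distrib]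

theorem ker_linearCombination_le (h : HasCycleGram a b) :
    LinearMap.ker (Fintype.linearCombination F b) ≤ periodTwo F n := by
  rcases eq_or_ne n 1 with rfl | hn
  · exact fun x _ i => congrArg x (Subsingleton.elim _ _)
  intro x hx
  rw [LinearMap.mem_ker, Fintype.linearCombination_apply] at hx
  have pair_sum (i : ZMod n) : x i + x (i + 1) = ∑ j, x j := by
    have := h.dotProduct_sum_smul hn x i
    rw [hx, dotProduct_zero] at this
    exact (sub_eq_zero.1 this.symm).symm
  intro i
  have := (pair_sum (i + 1)).trans (pair_sum i).symm
  rw [add_assoc, one_add_one_eq_two] at this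
  linear_combination this

theorem le_card_add_two (h : HasCycleGram a b) : n ≤ Fintype.card ι + 2 := by
  have rank_nullity := (Fintype.linearCombination F b).finrank_range_add_finrank_ker
  have range_le := (LinearMap.range (Fintype.linearCombination F b)).finrank_le
  have ker_le := (Submodule.finrank_mono h.ker_linearCombination_le).trans finrank_periodTwo_le
  simp only [finrank_fintype_fun_eq_card, ZMod.card] at rank_nullity range_le
  lia

theorem le_card_of_odd [CharP F 2] (h : HasCycleGram a b) (hn : Odd n) (hn1 : n ≠ 1) :
    n ≤ Fintype.card ι := by
  have independent : LinearIndependent F b := by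
    rw [Fintype.linearIndependent_iff]
    intro x hx i
    have periodic_two : Periodic x 2 :=
      h.ker_linearCombination_le (by simpa [Fintype.linearCombination_apply] using hx)
    have constant := apply_eq_apply_zero_of_periodic_one <|
      periodic_one_of_periodic_two_of_odd hn periodic_two
    have := h.dotProduct_sum_smul hn1 x i
    rw [hx] at this
    simpa [constant, CharTwo.add_self_eq_zero, CharTwo.natCast_eq_ite,
      Nat.not_even_iff_odd.2 hn] using this.symm
  simpa using independent.fintype_card_le_finrank

theorem sum_smul_eq_zero_of_span_ne_top (h : HasCycleGram a b) (hn : n = Fintype.card ι + 1)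
    (hb : Submodule.span F (Set.range b) ≠ ⊤) {x : ZMod n → F} (hx : Periodic x 2) :
    ∑ j, x j • b j = 0 := by
  have rank_nullity := (Fintype.linearCombination F b).finrank_range_add_finrank_ker
  have range_lt := Submodule.finrank_lt hb
  rw [Fintype.range_linearCombination] at rank_nullity
  simp only [finrank_fintype_fun_eq_card, ZMod.card] at rank_nullity range_lt
  have ker_eq : LinearMap.ker (Fintype.linearCombination F b) = periodTwo F n :=
    Submodule.eq_of_le_of_finrank_le h.ker_linearCombination_le
      (finrank_periodTwo_le.trans (by lia))
  have : x ∈ LinearMap.ker (Fintype.linearCombination F b) := ker_eq ▸ hx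
  simpa [Fintype.linearCombination_apply] using this

theorem sum_smul_eq_zero_of_span_eq_top [CharP F 2] {m : ℕ} [NeZero (2 * m)]
    {a b : ZMod (2 * m) → ι → F} (h : HasCycleGram a b) (hm : Odd m)
    (ha : Submodule.span F (Set.range a) = ⊤) {x : ZMod (2 * m) → F} (hx : Periodic x 2) :
    ∑ j, x j • b j = 0 := by
  have pair_sum (i : ZMod (2 * m)) : x i + x (i + 1) = x 0 + x 1 := by
    have periodic_one : Periodic (fun i => x i + x (i + 1)) 1 := fun i => by
      change x (i + 1) + x (i + 1 + 1) = x i + x (i + 1)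
      rw [add_assoc, one_add_one_eq_two, hx, add_comm]
    simpa using apply_eq_apply_zero_of_periodic_one periodic_one i
  have orthogonal (i : ZMod (2 * m)) : (∑ j, x j • b j) ⬝ᵥ a i = 0 := by
    rw [dotProduct_comm, h.dotProduct_sum_smul (by lia), pair_sum, sum_eq_mul_of_periodic_two hx,
      CharTwo.natCast_eq_ite, if_neg (Nat.not_even_iff_odd.2 hm), one_mul, sub_self]
  refine dotProduct_eq_zero _ fun w => ?_
  have hw : w ∈ Submodule.span F (Set.range a) := ha ▸ Submodule.mem_top
  induction hw using Submodule.span_induction with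
  | mem w hw => obtain ⟨i, rfl⟩ := hw; exact orthogonal i
  | zero => exact dotProduct_zero _
  | add u v _ _ hu hv => rw [dotProduct_add, hu, hv, add_zero]
  | smul c u _ hu => rw [dotProduct_smul, hu, smul_zero]

end HasCycleGram

end CycleGram

section Blocking

variable {P L : Type*} [Membership P L] [ProjectivePlane P L] [Finite P] [Finite L]

theorem exists_line_subset_of_forall_exists_mem {S : Finset P} (hcard : #S ≤ order P L + 1)
    (hS : ∀ l : L, ∃ p ∈ S, p ∈ l) : ∃ l : L, ∀ p ∈ l, p ∈ S := by
  obtain ⟨-, -, -, l₀, -⟩ := exists_config (P := P) (L := L)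
  obtain ⟨p, hpS, -⟩ := hS l₀
  obtain ⟨l, hpl⟩ := Nondegenerate.exists_line (L := L) p
  obtain ⟨r, hrS, hrl⟩ := hS l
  have hpr : p ≠ r := fun h => hpl (h ▸ hrl)
  obtain ⟨hpm, hrm⟩ := HasLines.mkLine_ax (L := L) hpr
  refine ⟨HasLines.mkLine hpr, fun x hx => by_contra fun hxS => hpr ?_⟩
  -- Projecting `S` from a point outside it is onto the pencil, hence injective by counting.
  have ne_x (s : S) : s.1 ≠ x := fun h => hxS (h ▸ s.2)
  let project (s : S) : {l : L // x ∈ l} :=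
    ⟨HasLines.mkLine (ne_x s), (HasLines.mkLine_ax (ne_x s)).2⟩
  have project_eq (s : S) (l : {l : L // x ∈ l}) (hsl : s.1 ∈ l.1) : project s = l :=
    Subtype.ext <| (Nondegenerate.eq_or_eq (HasLines.mkLine_ax (ne_x s)).1
      (HasLines.mkLine_ax (ne_x s)).2 hsl l.2).resolve_left (ne_x s)
  have project_surjective : Surjective project := fun l =>
    let ⟨s, hsS, hsl⟩ := hS l.1
    ⟨⟨s, hsS⟩, project_eq ⟨s, hsS⟩ l hsl⟩
  have project_injective : Injective project := by
    refine (project_surjective.bijective_of_nat_card_le ?_).1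
    rw [Nat.card_eq_fintype_card, Fintype.card_coe]
    exact hcard.trans (lineCount_eq L x).ge
  exact congrArg Subtype.val <| @project_injective ⟨p, hpS⟩ ⟨r, hrS⟩ <|
    (project_eq _ ⟨_, hx⟩ hpm).trans (project_eq _ ⟨_, hx⟩ hrm).symm

theorem exists_mem_inter_of_forall_exists_mem {S T : Finset P} (hcardS : #S ≤ order P L + 1)
    (hcardT : #T ≤ order P L + 1) (hS : ∀ l : L, ∃ p ∈ S, p ∈ l) (hT : ∀ l : L, ∃ p ∈ T, p ∈ l) :
    ∃ p ∈ S, p ∈ T := by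
  obtain ⟨l, hl⟩ := exists_line_subset_of_forall_exists_mem hcardS hS
  obtain ⟨m, hm⟩ := exists_line_subset_of_forall_exists_mem hcardT hT
  rcases eq_or_ne l m with rfl | hlm
  · obtain ⟨p, hpS, hpl⟩ := hS l
    exact ⟨p, hpS, hm p hpl⟩
  · obtain ⟨hpl, hpm⟩ := HasPoints.mkPoint_ax (P := P) hlm
    exact ⟨_, hl _ hpl, hm _ hpm⟩

end Blocking

section Polygon

/-- An `n`-gon in an incidence structure, with side `l i` through the vertices `p i` and
`p (i + 1)` and no other incidence between its vertices and sides. -/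
def IsInducedPolygon {P L : Type*} [Membership P L] {n : ℕ} (p : ZMod n → P) (l : ZMod n → L) :
    Prop :=
  ∀ i j, p j ∈ l i ↔ j = i ∨ j = i + 1

theorem IsInducedPolygon.injective {P L : Type*} [Membership P L] {n : ℕ} {p : ZMod n → P}
    {l : ZMod n → L} (h : IsInducedPolygon p l) (hn : (2 : ZMod n) ≠ 0) : Injective p := by
  intro i j hij
  have on_next : j = i ∨ j = i + 1 := (h i j).1 (hij ▸ (h i i).2 (.inl rfl))
  have on_prev : j = i - 1 ∨ j = i := by
    simpa using (h (i - 1) j).1 (hij ▸ (h (i - 1) i).2 (.inr (by simp)))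
  rcases on_next with hj | hj
  · exact hj.symm
  · rcases on_prev with hj' | hj'
    · exact absurd (by linear_combination hj.symm.trans hj') hn
    · exact hj'.symm

/-- The coordinates of `u ⊗ u²`, where squares are taken entrywise. In characteristic two it
turns the cube of a dot product, which over `𝔽₄` only detects vanishing, into a dot product. -/
def tensorSq {R ι : Type*} [CommRing R] (u : ι → R) (k : ι × ι) : R := u k.1 * u k.2 ^ 2

theorem tensorSq_dotProduct_tensorSq {R ι : Type*} [CommRing R] [CharP R 2] [Fintype ι]
    (u v : ι → R) : tensorSq u ⬝ᵥ tensorSq v = (u ⬝ᵥ v) ^ 3 := by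
  rw [pow_succ' _ 2, dotProduct, dotProduct, CharTwo.sum_sq, sum_mul_sum, ← sum_product']
  exact sum_congr rfl fun k _ => by simp only [tensorSq]; ring

variable {K : Type*} [Field K]

theorem mem_iff_rep_dotProduct_rep (p l : ℙ K (Fin 3 → K)) : p ∈ l ↔ l.rep ⬝ᵥ p.rep = 0 := by
  rw [ofField.mem_iff, orthogonal_comm, ← orthogonal_mk l.rep_nonzero p.rep_nonzero, mk_rep,
    mk_rep]

theorem order_projectivization [DecidableEq K] [Finite K] :
    order (ℙ K (Fin 3 → K)) (ℙ K (Fin 3 → K)) = Nat.card K := by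
  have := Fintype.ofFinite (ℙ K (Fin 3 → K))
  have count := card_points (ℙ K (Fin 3 → K)) (ℙ K (Fin 3 → K))
  rw [← Nat.card_eq_fintype_card, card_of_finrank K _ (finrank_fin_fun K)] at count
  simp only [sum_range_succ, sum_range_zero] at count
  nlinarith

theorem IsInducedPolygon.symm {n : ℕ} {p l : ZMod n → ℙ K (Fin 3 → K)}
    (h : IsInducedPolygon p l) : IsInducedPolygon (fun i => l (i - 1)) p := by
  intro i j
  rw [ofField.mem_iff, orthogonal_comm, ← ofField.mem_iff, h, sub_add_cancel, eq_sub_iff_add_eq]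
  grind

theorem charP_two_of_card_eq_four (hK : Nat.card K = 4) : CharP K 2 := by
  have : Finite K := Nat.finite_of_card_ne_zero (by lia)
  have := Fintype.ofFinite K
  have four_eq_zero : ((4 : ℕ) : K) = 0 := by
    rw [← hK, Nat.card_eq_fintype_card, FiniteField.cast_card_eq_zero]
  refine CharTwo.of_one_ne_zero_of_two_eq_zero one_ne_zero (pow_eq_zero_iff two_ne_zero |>.1 ?_)
  push_cast at four_eq_zero
  linear_combination four_eq_zero

theorem tensorSq_rep_dotProduct (hK : Nat.card K = 4) (p l : ℙ K (Fin 3 → K)) [Decidable (p ∈ l)] :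
    tensorSq l.rep ⬝ᵥ tensorSq p.rep = if p ∈ l then 0 else 1 := by
  have : Finite K := Nat.finite_of_card_ne_zero (by lia)
  have := Fintype.ofFinite K
  have := charP_two_of_card_eq_four hK
  rw [tensorSq_dotProduct_tensorSq]
  split_ifs with hpl
  · rw [(mem_iff_rep_dotProduct_rep p l).1 hpl, zero_pow three_ne_zero]
  · have := FiniteField.pow_card_sub_one_eq_one _ (mt (mem_iff_rep_dotProduct_rep p l).2 hpl)
    rwa [← Nat.card_eq_fintype_card, hK] at this

theorem IsInducedPolygon.hasCycleGram (hK : Nat.card K = 4) {n : ℕ}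
    {p l : ZMod n → ℙ K (Fin 3 → K)} (h : IsInducedPolygon p l) :
    HasCycleGram (fun i => tensorSq (l i).rep) (fun j => tensorSq (p j).rep) := by
  classical
  intro i j
  simp only [tensorSq_rep_dotProduct hK, h i j]

theorem exists_mem_of_sum_smul_tensorSq_eq_zero (hK : Nat.card K = 4) {ι : Type*} [Fintype ι]
    {p : ι → ℙ K (Fin 3 → K)} {x : ι → K} (hx : ∑ j, x j • tensorSq (p j).rep = 0)
    (hx_sum : ∑ j, x j ≠ 0) (l : ℙ K (Fin 3 → K)) : ∃ j, x j ≠ 0 ∧ p j ∈ l := by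
  classical
  by_contra! avoids
  refine hx_sum ?_
  calc ∑ j, x j = ∑ j, x j * (if p j ∈ l then 0 else 1) := by
        refine sum_congr rfl fun j _ => ?_
        by_cases hj : x j = 0 <;> simp [hj, avoids j]
    _ = tensorSq l.rep ⬝ᵥ ∑ j, x j • tensorSq (p j).rep := by
        simp only [dotProduct_sum, dotProduct_smul, tensorSq_rep_dotProduct hK, smul_eq_mul]
    _ = 0 := by rw [hx, dotProduct_zero]

/-- The residue class of `c` modulo two in `ℤ/10ℤ`, indexing alternate vertices of a decagon. -/
def parityClass (c : Fin 2) : Finset (ZMod 10) := {j | j.val % 2 = c}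

theorem exists_periodic_sum_smul_tensorSq_ne_zero (hK : Nat.card K = 4)
    {p : ZMod 10 → ℙ K (Fin 3 → K)} (hp : Injective p) :
    ∃ x : ZMod 10 → K, Periodic x 2 ∧ ∑ j, x j • tensorSq (p j).rep ≠ 0 := by
  classical
  have : Finite K := Nat.finite_of_card_ne_zero (by lia)
  have := charP_two_of_card_eq_four hK
  by_contra! relation
  have card_eq (c : Fin 2) : #(parityClass c) = 5 := by revert c; decide
  have meets_every_line (c : Fin 2) (l : ℙ K (Fin 3 → K)) :
      ∃ r ∈ (parityClass c).image p, r ∈ l := by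
    let x (j : ZMod 10) : K := if j ∈ parityClass c then 1 else 0
    have mem_add_two : ∀ j, j + 2 ∈ parityClass c ↔ j ∈ parityClass c := by revert c; decide
    have hx_sum : ∑ j, x j ≠ 0 := by
      simp [x, card_eq, CharTwo.ofNat_eq_mod]
    obtain ⟨j, hj, hjl⟩ := exists_mem_of_sum_smul_tensorSq_eq_zero hK
      (relation x fun j => by simp only [x, mem_add_two]) hx_sum l
    exact ⟨p j, mem_image_of_mem p (by simpa [x] using hj), hjl⟩
  have card_le (c : Fin 2) : #((parityClass c).image p) ≤
      order (ℙ K (Fin 3 → K)) (ℙ K (Fin 3 → K)) + 1 := by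
    rw [order_projectivization, hK]
    exact card_image_le.trans (card_eq c).le
  obtain ⟨_, hr0, hr1⟩ := exists_mem_inter_of_forall_exists_mem (card_le 0) (card_le 1)
    (meets_every_line 0) (meets_every_line 1)
  have disjoint : Disjoint (parityClass 0) (parityClass 1) := by decide
  exact Finset.disjoint_left.1 ((disjoint_image hp).2 disjoint) hr0 hr1

theorem not_isInducedPolygon_ten (hK : Nat.card K = 4) (p l : ZMod 10 → ℙ K (Fin 3 → K)) :
    ¬ IsInducedPolygon p l := by
  intro h
  have := charP_two_of_card_eq_four hK
  have two_ne_zero : (2 : ZMod 10) ≠ 0 := by decide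
  by_cases hspan : Submodule.span K (Set.range fun i => tensorSq (l i).rep) = ⊤
  · obtain ⟨x, hx, hne⟩ :=
      exists_periodic_sum_smul_tensorSq_ne_zero hK (h.injective two_ne_zero)
    exact hne ((h.hasCycleGram hK).sum_smul_eq_zero_of_span_eq_top (m := 5) (by decide) hspan hx)
  · obtain ⟨x, hx, hne⟩ :=
      exists_periodic_sum_smul_tensorSq_ne_zero hK (h.symm.injective two_ne_zero)
    refine hne ((h.symm.hasCycleGram hK).sum_smul_eq_zero_of_span_ne_top (by simp) ?_ hx)
    rwa [← (Equiv.subRight (1 : ZMod 10)).surjective.range_comp] at hspan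

theorem IsInducedPolygon.lt_ten (hK : Nat.card K = 4) {n : ℕ} [NeZero n]
    {p l : ZMod n → ℙ K (Fin 3 → K)} (h : IsInducedPolygon p l) : n < 10 := by
  have := charP_two_of_card_eq_four hK
  have gram := h.hasCycleGram hK
  have le_eleven : n ≤ 11 := by simpa using gram.le_card_add_two
  have ne_eleven : n ≠ 11 := by
    rintro rfl
    simpa using gram.le_card_of_odd (by decide) (by decide)
  have ne_ten : n ≠ 10 := by
    rintro rfl
    exact not_isInducedPolygon_ten hK p l h
  lia

end Polygon

section InducedCycle

theorem exists_dotProduct_eq_zero_iff_mem {K ι : Type*} [Field K] [Fintype ι]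
    {L : Submodule K (ι → K)} (hL : finrank K L + 1 = Fintype.card ι) :
    ∃ w : ι → K, w ≠ 0 ∧ ∀ x, x ∈ L ↔ w ⬝ᵥ x = 0 := by
  classical
  have L_lt_top : L < ⊤ := by
    refine lt_top_iff_ne_top.2 fun h => ?_
    rw [h, finrank_top, finrank_fintype_fun_eq_card] at hL
    lia
  obtain ⟨f, hf, hLf⟩ := Submodule.exists_le_ker_of_lt_top L L_lt_top
  have finrank_ker := f.finrank_range_add_finrank_ker
  rw [LinearMap.range_eq_top.2 (LinearMap.surjective hf), finrank_top, finrank_self,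
    finrank_fintype_fun_eq_card] at finrank_ker
  have L_eq : L = LinearMap.ker f := Submodule.eq_of_le_of_finrank_le hLf (by lia)
  obtain ⟨w, rfl⟩ := (dotProductEquiv K ι).surjective f
  exact ⟨w, fun h => hf (by rw [h, map_zero]), fun x => by simp [L_eq]⟩

theorem exists_forall_le_iff_mem (l : ProjLine) :
    ∃ w : ℙ F4 V3, ∀ p : ProjPoint, p.1 ≤ l.1 ↔ (equivSubmodule F4 V3).symm p ∈ w := by
  obtain ⟨w, hw, hmem⟩ := exists_dotProduct_eq_zero_iff_mem (L := l.1) (by simp [l.2])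
  refine ⟨mk F4 w hw, fun p => ?_⟩
  obtain ⟨v, rfl⟩ := (equivSubmodule F4 V3).surjective p
  induction v with | h v hv =>
  rw [Equiv.symm_apply_apply, ofField.mem_iff, orthogonal_mk, dotProduct_comm, ← hmem]
  exact Submodule.span_singleton_le_iff_mem _ _

/-- Multiplication by two, as an embedding of `ℤ/nℤ` into `ℤ/2nℤ`. It locates the vertices of an
`n`-gon on the corresponding `2n`-cycle of the incidence graph. -/
def double (n : ℕ) : ZMod n →+ ZMod (2 * n) :=
  ZMod.lift n ⟨zmultiplesHom _ 2, by simpa [mul_comm] using ZMod.natCast_self (2 * n)⟩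

theorem double_injective (n : ℕ) : Injective (double n) := by
  refine (ZMod.lift_injective n).2 fun m hm => ?_
  have : ((2 * m : ℤ) : ZMod (2 * n)) = 0 := by simpa [mul_comm] using hm
  rw [ZMod.intCast_zmod_eq_zero_iff_dvd] at this ⊢
  push_cast at this
  exact Int.dvd_of_mul_dvd_mul_left two_ne_zero this

theorem double_add_one {n : ℕ} (i : ZMod n) : double n (i + 1) = double n i + 1 + 1 := by
  have double_one : double n 1 = 2 := by
    simpa [double] using ZMod.lift_coe n ⟨zmultiplesHom (ZMod (2 * n)) 2, _⟩ 1
  rw [map_add, double_one, add_assoc, one_add_one_eq_two]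

theorem isLeft_eq_not_isLeft_of_adj {x y : ProjPoint ⊕ ProjLine} (h : IncGraph.Adj x y) :
    y.isLeft = !x.isLeft := by
  rcases x with _ | _ <;> rcases y with _ | _ <;> first | rfl | exact h.elim

theorem isInducedCycle_shift {V : Type*} {G : SimpleGraph V} {k : ℕ} {c : ZMod k → V}
    (hc : IsInducedCycle G k c) : IsInducedCycle G k fun i => c (i + 1) :=
  ⟨hc.1.comp (add_left_injective 1), fun i j => by simp [hc.2]⟩

theorem exists_points_lines_of_isInducedCycle {n : ℕ} [NeZero n]
    {c : ZMod (2 * n) → ProjPoint ⊕ ProjLine} (hc : IsInducedCycle IncGraph (2 * n) c)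
    (h0 : (c 0).isLeft) :
    ∃ (p : ZMod n → ProjPoint) (l : ZMod n → ProjLine),
      ∀ i j, (p j).1 ≤ (l i).1 ↔ j = i ∨ j = i + 1 := by
  have isLeft_succ (i : ZMod (2 * n)) : (c (i + 1)).isLeft = !(c i).isLeft :=
    isLeft_eq_not_isLeft_of_adj ((hc.2 _ _).2 (.inl rfl))
  have isLeft_double (j : ZMod n) : (c (double n j)).isLeft := by
    have periodic_one : Periodic (fun j => (c (double n j)).isLeft) 1 := fun j => by
      simp [double_add_one, isLeft_succ]
    simpa [h0] using apply_eq_apply_zero_of_periodic_one periodic_one j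
  have isRight_double_add_one (i : ZMod n) : (c (double n i + 1)).isRight := by
    simpa [isLeft_double] using isLeft_succ (double n i)
  choose p hp using fun j => Sum.isLeft_iff.1 (isLeft_double j)
  choose l hl using fun i => Sum.isRight_iff.1 (isRight_double_add_one i)
  refine ⟨p, l, fun i j => ?_⟩
  have adj_iff := hc.2 (double n j) (double n i + 1)
  rw [hp, hl, ← double_add_one, add_left_inj, (double_injective n).eq_iff,
    (double_injective n).eq_iff, eq_comm (a := i)] at adj_iff
  exact adj_iff

theorem exists_isInducedPolygon_of_isInducedCycle {n : ℕ} [NeZero n]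
    {c : ZMod (2 * n) → ProjPoint ⊕ ProjLine} (hc : IsInducedCycle IncGraph (2 * n) c) :
    ∃ p l : ZMod n → ℙ F4 V3, IsInducedPolygon p l := by
  obtain ⟨c, hc, h0⟩ : ∃ c, IsInducedCycle IncGraph (2 * n) c ∧ (c 0).isLeft := by
    by_cases h0 : (c 0).isLeft
    · exact ⟨c, hc, h0⟩
    · have adj : IncGraph.Adj (c 0) (c (0 + 1)) := (hc.2 _ _).2 (.inl rfl)
      exact ⟨_, isInducedCycle_shift hc, by simpa [h0] using isLeft_eq_not_isLeft_of_adj adj⟩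
  obtain ⟨p, l, hpl⟩ := exists_points_lines_of_isInducedCycle hc h0
  choose w hw using exists_forall_le_iff_mem
  exact ⟨fun j => (equivSubmodule F4 V3).symm (p j), fun i => w (l i), fun i j =>
    (hw (l i) (p j)).symm.trans (hpl i j)⟩

end InducedCycle

end PlaneOfOrderFour

/-- For every integer `n ≥ 10`, the incidence graph of points and lines of `ℙ²(𝔽₄)`
contains no induced cycle of length `2n`. -/
theorem no_induced_cycle_of_length_ge_twenty (n : ℕ) (hn : 10 ≤ n) :
    ¬ ∃ c : ZMod (2 * n) → (ProjPoint ⊕ ProjLine), IsInducedCycle IncGraph (2 * n) c := by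
  rintro ⟨c, hc⟩
  have : NeZero n := ⟨by lia⟩
  have card_F4 : Nat.card F4 = 4 := GaloisField.card 2 2 two_ne_zero
  obtain ⟨p, l, hpl⟩ := PlaneOfOrderFour.exists_isInducedPolygon_of_isInducedCycle hc
  exact (hpl.lt_ten card_F4).not_ge hn
end

section
/- Let n ≥ 3 be an integer and let P : ℤ/nℤ → (points of ℙ²(𝔽₄)) be a map such that for all i, j ∈ ℤ/nℤ with j ≠ i and j ≠ i+1, the three points P(i), P(i+1), P(j) are not collinear. Then n ∈ {3, 4, 5, 6, 8, 9}. -/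
/-- Three points of `ℙ²(𝔽₄)` (given as subspaces of `𝔽₄³`) are collinear if they are
contained in a common 2-dimensional linear subspace of `𝔽₄³`. -/
def Collin3 (p q r : Submodule F4 V3) : Prop :=
  ∃ L : Submodule F4 V3, Module.finrank F4 L = 2 ∧ p ≤ L ∧ q ≤ L ∧ r ≤ L

/-!
Four cyclically consecutive points are in general position, so a projectivity moves the first four
to the standard frame `(1 : 0 : 0), (0 : 1 : 0), (0 : 0 : 1), (1 : 1 : 1)`. The line through the
second and third of them is then `x₀ = 0`, so all points after the fourth have the form
`(1 : x : y)`. Adding these one at a time leaves a tiny search tree: there are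
1, 4, 10, 12, 18, 14, 8, 0 ways to continue the frame to a sequence of 4, 5, …, 11 points in which
no line through two consecutive points meets a third one. Hence `n ≤ 10`, and none of the
sequences of 7 or 10 points closes up.
-/

section Search

variable {α : Type*} {A : α → α → α → Prop} {n : ℕ} {p : ℕ → α}

/-- The finite sequence `p 0, …, p (n - 1)` is avoiding for a ternary relation `A` if every two
consecutive terms are in relation with every other term. For `A` the non-collinearity of points,
the line joining two consecutive points contains no further point of the sequence. -/
def IsAvoidingPath (A : α → α → α → Prop) (n : ℕ) (p : ℕ → α) : Prop :=
  ∀ i j, i + 1 < n → j < n → j ≠ i → j ≠ i + 1 → A (p i) (p (i + 1)) (p j)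

/-- The condition for an avoiding path to be avoiding as a cycle: the last and the first term are
in relation with all the others. -/
def ClosesUp (A : α → α → α → Prop) (n : ℕ) (p : ℕ → α) : Prop :=
  ∀ j, 0 < j → j + 1 < n → A (p (n - 1)) (p 0) (p j)

/-- The list `[p (k - 1), …, p 0]`: paths are stored newest point first, so that they grow by
`List.cons`. -/
def revPrefix (p : ℕ → α) (k : ℕ) : List α :=
  ((List.range k).map p).reverse

/-- `IsExtension A l y` says that the avoiding path stored in `l`, newest point first, stays
avoiding when `y` is appended. -/
def IsExtension (A : α → α → α → Prop) (l : List α) (y : α) : Prop :=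
  l.IsChain (fun b a => A a b y) ∧ ∀ a ∈ l.head?, ∀ t ∈ l.tail, A a y t

/-- `ClosesUp` for a path with first point `o` stored in `l`, newest point first. -/
def IsClosing (A : α → α → α → Prop) (o : α) (l : List α) : Prop :=
  ∀ a ∈ l.head?, ∀ t ∈ l.tail.dropLast, A a o t

instance [∀ a b c, Decidable (A a b c)] (l : List α) (y : α) : Decidable (IsExtension A l y) :=
  inferInstanceAs (Decidable (_ ∧ _))

instance [∀ a b c, Decidable (A a b c)] (o : α) (l : List α) : Decidable (IsClosing A o l) :=
  inferInstanceAs (Decidable (∀ a ∈ l.head?, _))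

/-- All avoiding paths obtained from the path `start` by appending `k` points of `candidates`,
stored newest point first. -/
def extensions (A : α → α → α → Prop) [∀ a b c, Decidable (A a b c)]
    (candidates start : List α) : ℕ → List (List α)
  | 0 => [start]
  | k + 1 => (extensions A candidates start k).flatMap fun l =>
      (candidates.filter fun y => IsExtension A l y).map (· :: l)

theorem revPrefix_succ (p : ℕ → α) (k : ℕ) : revPrefix p (k + 1) = p k :: revPrefix p k := by
  simp [revPrefix, List.range_succ]

theorem mem_revPrefix {k : ℕ} {t : α} : t ∈ revPrefix p k ↔ ∃ j < k, p j = t := by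
  simp [revPrefix]

theorem isChain_revPrefix {R : α → α → Prop} {k : ℕ} (h : ∀ i, i + 1 < k → R (p (i + 1)) (p i)) :
    (revPrefix p k).IsChain R := by
  rw [revPrefix, List.isChain_reverse, List.isChain_map, List.isChain_range]
  exact fun i hi => h i (by omega)

theorem IsAvoidingPath.isExtension (hp : IsAvoidingPath A n p) {k : ℕ} (hk : k < n) :
    IsExtension A (revPrefix p k) (p k) := by
  refine ⟨isChain_revPrefix fun i hi => hp i k (by omega) hk (by omega) (by omega), ?_⟩
  cases k with
  | zero => simp [revPrefix]
  | succ k =>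
    simp only [revPrefix_succ, List.head?_cons, Option.mem_some_iff, List.tail_cons, mem_revPrefix]
    rintro _ rfl _ ⟨j, hj, rfl⟩
    exact hp k j hk (by omega) (by omega) (by omega)

theorem ClosesUp.isClosing (hp : ClosesUp A n p) : IsClosing A (p 0) (revPrefix p n) := by
  cases n with
  | zero => simp [IsClosing, revPrefix]
  | succ n =>
    simp only [IsClosing, revPrefix_succ, List.head?_cons, Option.mem_some_iff, List.tail_cons]
    rintro _ rfl t ht
    obtain ⟨j, ⟨hj₀, hjn⟩, rfl⟩ : ∃ j, (0 < j ∧ j < n) ∧ p j = t := by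
      simp only [revPrefix, List.dropLast_reverse, List.mem_reverse, ← List.map_tail,
        List.tail_range, List.mem_map, List.mem_range'_1] at ht
      obtain ⟨j, hj, rfl⟩ := ht
      exact ⟨j, by omega, rfl⟩
    exact hp j hj₀ (by omega)

theorem IsAvoidingPath.revPrefix_mem_extensions [∀ a b c, Decidable (A a b c)]
    (hp : IsAvoidingPath A n p) {candidates : List α} {s : ℕ}
    (hcand : ∀ j < n, s ≤ j → p j ∈ candidates) {k : ℕ} (hk : s + k ≤ n) :
    revPrefix p (s + k) ∈ extensions A candidates (revPrefix p s) k := by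
  induction k with
  | zero => simp [extensions]
  | succ k ih =>
    simp only [extensions, List.mem_flatMap, List.mem_map, List.mem_filter, decide_eq_true_eq]
    exact ⟨_, ih (by omega), p (s + k),
      ⟨hcand _ (by omega) (by omega), hp.isExtension (by omega)⟩, (revPrefix_succ p (s + k)).symm⟩

variable {c : ZMod n → α}

theorem natCast_ne_natCast_of_lt {i j : ℕ} (hi : i < n) (hj : j < n) (hij : i ≠ j) :
    (i : ZMod n) ≠ j := by
  rwa [Ne, ZMod.natCast_eq_natCast_iff', Nat.mod_eq_of_lt hi, Nat.mod_eq_of_lt hj]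

theorem isAvoidingPath_of_cyclic (h : ∀ i j, j ≠ i → j ≠ i + 1 → A (c i) (c (i + 1)) (c j)) :
    IsAvoidingPath A n fun i => c i := by
  intro i j hi hj hji hji'
  have hne : (j : ZMod n) ≠ (i : ZMod n) + 1 := by
    exact_mod_cast natCast_ne_natCast_of_lt hj hi hji'
  simpa using h i j (natCast_ne_natCast_of_lt hj (by omega) hji) hne

theorem closesUp_of_cyclic (h : ∀ i j, j ≠ i → j ≠ i + 1 → A (c i) (c (i + 1)) (c j)) :
    ClosesUp A n fun i => c i := by
  intro j hj₀ hjn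
  have hlast : ((n - 1 : ℕ) : ZMod n) + 1 = (0 : ℕ) := by
    rw [← Nat.cast_add_one, Nat.sub_add_cancel (by omega), ZMod.natCast_self, Nat.cast_zero]
  have hA := h (n - 1 : ℕ) j (natCast_ne_natCast_of_lt (by omega) (by omega) (by omega))
    (hlast ▸ natCast_ne_natCast_of_lt (by omega) (by omega) (by omega))
  rwa [hlast] at hA

end Search

section Coordinates

variable {K V : Type*} [Field K] [AddCommGroup V] [Module K V]

theorem linearIndependent_triple_iff {u v w : Fin 3 → K} :
    LinearIndependent K ![u, v, w] ↔
      u 0 * (v 1 * w 2 - v 2 * w 1) - u 1 * (v 0 * w 2 - v 2 * w 0)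
        + u 2 * (v 0 * w 1 - v 1 * w 0) ≠ 0 := by
  have hdet : (Matrix.of ![u, v, w]).det = u 0 * (v 1 * w 2 - v 2 * w 1)
      - u 1 * (v 0 * w 2 - v 2 * w 0) + u 2 * (v 0 * w 1 - v 1 * w 0) := by
    simp only [Matrix.det_fin_three, Matrix.of_apply, Matrix.cons_val]
    ring
  rw [← hdet, ← isUnit_iff_ne_zero, ← Matrix.isUnit_iff_isUnit_det,
    ← Matrix.linearIndependent_rows_iff_isUnit]
  rfl

instance [DecidableEq K] (u v w : Fin 3 → K) : Decidable (LinearIndependent K ![u, v, w]) :=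
  decidable_of_iff _ linearIndependent_triple_iff.symm

theorem linearIndependent_triple_ringEquiv_comp {L : Type*} [Field L] (f : K ≃+* L)
    {u v w : Fin 3 → K} (h : LinearIndependent K ![u, v, w]) :
    LinearIndependent L ![f ∘ u, f ∘ v, f ∘ w] := by
  rw [linearIndependent_triple_iff] at h ⊢
  simpa only [Function.comp_apply, ← map_mul, ← map_sub, ← map_add] using f.map_ne_zero_iff.2 h

theorem linearIndependent_triple_map {W : Type*} [AddCommGroup W] [Module K W] (f : V ≃ₗ[K] W)
    {u v w : V} (h : LinearIndependent K ![u, v, w]) : LinearIndependent K ![f u, f v, f w] := by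
  have hf := h.map' f.toLinearMap f.ker
  have hcomp : ⇑f.toLinearMap ∘ ![u, v, w] = ![f u, f v, f w] := by
    simp [funext_iff, Fin.forall_fin_succ]
  rwa [hcomp] at hf

theorem exists_basis_sum_eq {ι : Type*} [Fintype ι] (b : Module.Basis ι K V) {w : V}
    (hw : ∀ i, b.repr w i ≠ 0) :
    ∃ (b' : Module.Basis ι K V) (r : ι → Kˣ), (∀ i, b i = r i • b' i) ∧ ∑ i, b' i = w := by
  refine ⟨b.isUnitSMul fun i => (hw i).isUnit, fun i => ((hw i).isUnit.unit)⁻¹, fun i => ?_, ?_⟩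
  · rw [Module.Basis.isUnitSMul, Module.Basis.unitsSMul_apply, inv_smul_smul]
  · simp only [Module.Basis.isUnitSMul_apply, b.sum_repr]

theorem exists_basis_of_frame (hV : Module.finrank K V = 3) {v₀ v₁ v₂ v₃ : V}
    (h₀₁₂ : LinearIndependent K ![v₀, v₁, v₂]) (h₀₁₃ : LinearIndependent K ![v₀, v₁, v₃])
    (h₁₂₃ : LinearIndependent K ![v₁, v₂, v₃]) (h₂₃₀ : LinearIndependent K ![v₂, v₃, v₀]) :
    ∃ (b : Module.Basis (Fin 3) K V) (r : Fin 3 → Kˣ),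
      (∀ i, ![v₀, v₁, v₂] i = r i • b i) ∧ ∑ i, b i = v₃ := by
  obtain ⟨e, he⟩ : ∃ e : Module.Basis (Fin 3) K V, ⇑e = ![v₀, v₁, v₂] :=
    ⟨basisOfLinearIndependentOfCardEqFinrank h₀₁₂ (by simp [hV]), by simp⟩
  obtain ⟨he₀, he₁, he₂⟩ : e 0 = v₀ ∧ e 1 = v₁ ∧ e 2 = v₂ := by simp [he]
  rw [← he]
  subst he₀ he₁ he₂
  have hcoord₀ := linearIndependent_triple_iff.1 (linearIndependent_triple_map e.equivFun h₁₂₃)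
  have hcoord₁ := linearIndependent_triple_iff.1 (linearIndependent_triple_map e.equivFun h₂₃₀)
  have hcoord₂ := linearIndependent_triple_iff.1 (linearIndependent_triple_map e.equivFun h₀₁₃)
  apply exists_basis_sum_eq e
  intro i
  fin_cases i
  · simpa using hcoord₀
  · simpa using hcoord₁
  · simpa using hcoord₂

/-- The representative of a point `(x₀ : x₁ : x₂)` of the projective plane whose first nonzero
coordinate is `1`. The zero vector is left as it is. -/
def projNormalize [DecidableEq K] (x : Fin 3 → K) : Fin 3 → K :=
  (if x 0 ≠ 0 then x 0 else if x 1 ≠ 0 then x 1 else x 2)⁻¹ • x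

section Normalize

variable [DecidableEq K]

theorem projNormalize_smul (r : Kˣ) (x : Fin 3 → K) :
    projNormalize (r • x) = projNormalize x := by
  simp only [projNormalize, Units.smul_def, Pi.smul_apply, smul_eq_mul, ne_eq, mul_eq_zero,
    r.ne_zero, false_or, ← mul_ite, mul_inv, smul_smul]
  rw [mul_right_comm, inv_mul_cancel₀ r.ne_zero, one_mul]

theorem projNormalize_single (i : Fin 3) :
    projNormalize (Pi.single i 1 : Fin 3 → K) = Pi.single i 1 := by
  fin_cases i <;> simp [projNormalize]

theorem projNormalize_apply_zero {x : Fin 3 → K} (hx : x 0 ≠ 0) : projNormalize x 0 = 1 := by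
  simp [projNormalize, hx]

theorem exists_projNormalize_eq_smul {x : Fin 3 → K} (hx : x ≠ 0) :
    ∃ r : Kˣ, projNormalize x = r • x := by
  have hpivot : (if x 0 ≠ 0 then x 0 else if x 1 ≠ 0 then x 1 else x 2) ≠ 0 := by
    contrapose! hx
    have hcoord : x 0 = 0 ∧ x 1 = 0 ∧ x 2 = 0 := by grind
    simpa [funext_iff, Fin.forall_fin_succ] using hcoord
  exact ⟨(Units.mk0 _ hpivot)⁻¹, by simp [projNormalize, Units.smul_def]⟩

theorem linearIndependent_triple_projNormalize {u v w : Fin 3 → K}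
    (h : LinearIndependent K ![u, v, w]) :
    LinearIndependent K ![projNormalize u, projNormalize v, projNormalize w] := by
  obtain ⟨r, hr⟩ := exists_projNormalize_eq_smul (h.ne_zero 0)
  obtain ⟨s, hs⟩ := exists_projNormalize_eq_smul (h.ne_zero 1)
  obtain ⟨t, ht⟩ := exists_projNormalize_eq_smul (h.ne_zero 2)
  convert h.units_smul ![r, s, t] using 1
  ext i : 1
  fin_cases i
  exacts [hr, hs, ht]

end Normalize

theorem exists_standard_coordinates {ι : Type*} (hV : Module.finrank K V = 3) (v : ι → V)
    {i₀ i₁ i₂ i₃ : ι} (h₀₁₂ : LinearIndependent K ![v i₀, v i₁, v i₂])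
    (h₀₁₃ : LinearIndependent K ![v i₀, v i₁, v i₃])
    (h₁₂₃ : LinearIndependent K ![v i₁, v i₂, v i₃])
    (h₂₃₀ : LinearIndependent K ![v i₂, v i₃, v i₀]) :
    ∃ c : ι → Fin 3 → K,
      c i₀ = ![1, 0, 0] ∧ c i₁ = ![0, 1, 0] ∧ c i₂ = ![0, 0, 1] ∧ c i₃ = ![1, 1, 1] ∧
      (∀ j, LinearIndependent K ![v i₁, v i₂, v j] → c j 0 = 1) ∧
      ∀ i j k, LinearIndependent K ![v i, v j, v k] → LinearIndependent K ![c i, c j, c k] := by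
  classical
  obtain ⟨b, r, hr, hsum⟩ := exists_basis_of_frame hV h₀₁₂ h₀₁₃ h₁₂₃ h₂₃₀
  have hsmul (s : Kˣ) (x : V) : b.equivFun (s • x) = s • b.equivFun x := map_smul b.equivFun s.1 x
  have hb (i : Fin 3) : b.equivFun (b i) = Pi.single i 1 := by
    ext
    simp [Pi.single_apply, eq_comm]
  have hcoord (i : Fin 3) : b.equivFun (![v i₀, v i₁, v i₂] i) = r i • Pi.single i 1 := by
    rw [hr, hsmul, hb]
  have hframe (i : Fin 3) : projNormalize (b.equivFun (![v i₀, v i₁, v i₂] i)) = Pi.single i 1 := by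
    rw [hcoord, projNormalize_smul, projNormalize_single]
  refine ⟨fun j => projNormalize (b.equivFun (v j)), (hframe 0).trans ?_, (hframe 1).trans ?_,
    (hframe 2).trans ?_, ?_, fun j hj => projNormalize_apply_zero fun hj₀ => ?_, fun i j k h =>
    linearIndependent_triple_projNormalize (linearIndependent_triple_map b.equivFun h)⟩
  · simp [funext_iff, Fin.forall_fin_succ]
  · simp [funext_iff, Fin.forall_fin_succ]
  · simp [funext_iff, Fin.forall_fin_succ]
  · simp [← hsum, hb, projNormalize, funext_iff, Fin.forall_fin_succ]
  · refine linearIndependent_triple_iff.1 (linearIndependent_triple_map b.equivFun hj) ?_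
    have h₁ : b.equivFun (v i₁) 0 = 0 := by simpa using congrFun (hcoord 1) 0
    have h₂ : b.equivFun (v i₂) 0 = 0 := by simpa using congrFun (hcoord 2) 0
    rw [h₁, h₂, hj₀]
    ring

theorem exists_le_finrank_eq [FiniteDimensional K V] (W : Submodule K V) {k : ℕ}
    (hW : Module.finrank K W ≤ k) (hk : k ≤ Module.finrank K V) :
    ∃ L : Submodule K V, Module.finrank K L = k ∧ W ≤ L := by
  induction k, hW using Nat.le_induction with
  | base => exact ⟨W, rfl, le_rfl⟩
  | succ k _ ih =>
    obtain ⟨L, hL, hWL⟩ := ih (by omega)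
    have hne : L ≠ ⊤ := by
      rintro rfl
      rw [finrank_top] at hL
      omega
    obtain ⟨x, -, hx⟩ := SetLike.exists_of_lt hne.lt_top
    exact ⟨L ⊔ K ∙ x, by rw [Submodule.finrank_sup_span_singleton hx, hL],
      hWL.trans le_sup_left⟩

theorem linearIndependent_of_not_exists_finrank_eq_two (hV : Module.finrank K V = 3) {u v w : V}
    (h : ¬∃ L : Submodule K V, Module.finrank K L = 2 ∧ K ∙ u ≤ L ∧ K ∙ v ≤ L ∧ K ∙ w ≤ L) :
    LinearIndependent K ![u, v, w] := by
  have : FiniteDimensional K V := .of_finrank_pos (by omega)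
  contrapose! h
  have hspan : Module.finrank K (Submodule.span K (Set.range ![u, v, w])) ≤ 2 := by
    rw [linearIndependent_iff_card_le_finrank_span, Fintype.card_fin, Set.finrank] at h
    omega
  obtain ⟨L, hL, hle⟩ := exists_le_finrank_eq _ hspan (by omega)
  have hmem (i : Fin 3) : K ∙ ![u, v, w] i ≤ L :=
    (Submodule.span_mono (Set.singleton_subset_iff.2 (Set.mem_range_self i))).trans hle
  exact ⟨L, hL, hmem 0, hmem 1, hmem 2⟩

end Coordinates

section FourElements

/-- A computable model of the field with four elements, `𝔽₂[ω] / (ω² = 1 + ω)`. -/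
abbrev ComputableF4 : Type := QuadraticAlgebra (ZMod 2) 1 1

instance : Fact (∀ r : ZMod 2, r ^ 2 ≠ 1 + 1 * r) := ⟨by decide⟩

instance : Fintype ComputableF4 := .ofEquiv _ (QuadraticAlgebra.equivProd 1 1).symm

theorem nonempty_ringEquiv_computableF4 {K : Type*} [Field K] (hK : Nat.card K = 4) :
    Nonempty (K ≃+* ComputableF4) := by
  have : Finite K := Nat.finite_of_card_ne_zero (by omega)
  have : Fintype K := .ofFinite K
  refine ⟨FiniteField.ringEquivOfCardEq ?_⟩
  rw [← Nat.card_eq_fintype_card, hK]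
  rfl

/-- Non-collinearity of the points of the projective plane represented by three vectors. -/
abbrev NonCollinear (u v w : Fin 3 → ComputableF4) : Prop :=
  LinearIndependent ComputableF4 ![u, v, w]

/-- Representatives `(1, x, y)` of the points of the projective plane outside the line `x₀ = 0`. -/
def affinePoints : List (Fin 3 → ComputableF4) :=
  let elements : List ComputableF4 := [⟨0, 0⟩, ⟨1, 0⟩, ⟨0, 1⟩, ⟨1, 1⟩]
  elements.flatMap fun x => elements.map fun y => ![1, x, y]

/-- Representatives of the standard projective frame, listed newest point first as in
`revPrefix`. -/
def standardFrame : List (Fin 3 → ComputableF4) :=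
  [![1, 1, 1], ![0, 0, 1], ![0, 1, 0], ![1, 0, 0]]

theorem mem_affinePoints {v : Fin 3 → ComputableF4} (hv : v 0 = 1) : v ∈ affinePoints := by
  have hmem : ∀ x y : ComputableF4, ![1, x, y] ∈ affinePoints := by decide
  have hcoord : v = ![1, v 1, v 2] := by simp [funext_iff, Fin.forall_fin_succ, hv]
  exact hcoord ▸ hmem (v 1) (v 2)

theorem extensions_standardFrame_seven_eq_nil :
    extensions NonCollinear affinePoints standardFrame 7 = [] := by
  decide +kernel

theorem not_isClosing_of_mem_extensions_six :
    ∀ l ∈ extensions NonCollinear affinePoints standardFrame 6,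
      ¬IsClosing NonCollinear ![1, 0, 0] l := by
  decide +kernel

theorem not_isClosing_of_mem_extensions_three :
    ∀ l ∈ extensions NonCollinear affinePoints standardFrame 3,
      ¬IsClosing NonCollinear ![1, 0, 0] l := by
  decide +kernel

theorem mem_of_isAvoidingPath_of_closesUp {n : ℕ} (hn : 4 ≤ n) {p : ℕ → Fin 3 → ComputableF4}
    (hpath : IsAvoidingPath NonCollinear n p) (hclose : ClosesUp NonCollinear n p)
    (hframe : revPrefix p 4 = standardFrame) (haffine : ∀ j < n, 4 ≤ j → p j 0 = 1) :
    n ∈ ({3, 4, 5, 6, 8, 9} : Set ℕ) := by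
  have hmem {k : ℕ} (hk : 4 + k ≤ n) :
      revPrefix p (4 + k) ∈ extensions NonCollinear affinePoints standardFrame k :=
    hframe ▸ hpath.revPrefix_mem_extensions
      (fun j hj hj' => mem_affinePoints (haffine j hj hj')) hk
  have hp₀ : p 0 = ![1, 0, 0] := by
    simp only [revPrefix_succ, standardFrame, List.cons.injEq] at hframe
    exact hframe.2.2.2.1
  have hclosing : IsClosing NonCollinear ![1, 0, 0] (revPrefix p n) := hp₀ ▸ hclose.isClosing
  have hlt : n < 11 := by
    by_contra! hn'
    simpa [extensions_standardFrame_seven_eq_nil] using hmem (k := 7) hn'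
  have hten : n ≠ 10 := by
    rintro rfl
    exact not_isClosing_of_mem_extensions_six _ (hmem le_rfl) hclosing
  have hseven : n ≠ 7 := by
    rintro rfl
    exact not_isClosing_of_mem_extensions_three _ (hmem le_rfl) hclosing
  simp only [Set.mem_insert_iff, Set.mem_singleton_iff]
  omega

theorem mem_of_linearIndependent_cyclic {K V : Type*} [Field K] (hK : Nat.card K = 4)
    [AddCommGroup V] [Module K V] (hV : Module.finrank K V = 3) {n : ℕ} (hn : 4 ≤ n)
    {v : ZMod n → V}
    (h : ∀ i j, j ≠ i → j ≠ i + 1 → LinearIndependent K ![v i, v (i + 1), v j]) :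
    n ∈ ({3, 4, 5, 6, 8, 9} : Set ℕ) := by
  obtain ⟨f⟩ := nonempty_ringEquiv_computableF4 hK
  have hpath : IsAvoidingPath (fun x y z => LinearIndependent K ![x, y, z]) n fun i => v i :=
    isAvoidingPath_of_cyclic h
  obtain ⟨c, hc₀, hc₁, hc₂, hc₃, haffine, hc⟩ := exists_standard_coordinates hV v
    (hpath 0 2 (by omega) (by omega) (by omega) (by omega))
    (hpath 0 3 (by omega) (by omega) (by omega) (by omega))
    (hpath 1 3 (by omega) (by omega) (by omega) (by omega))
    (hpath 2 0 (by omega) (by omega) (by omega) (by omega))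
  have hcyclic (i j : ZMod n) (hji : j ≠ i) (hji' : j ≠ i + 1) :
      NonCollinear (f ∘ c i) (f ∘ c (i + 1)) (f ∘ c j) :=
    linearIndependent_triple_ringEquiv_comp f (hc _ _ _ (h i j hji hji'))
  refine mem_of_isAvoidingPath_of_closesUp hn
    (isAvoidingPath_of_cyclic (c := fun i => f ∘ c i) hcyclic)
    (closesUp_of_cyclic (c := fun i => f ∘ c i) hcyclic) ?_ fun j hj hj₄ => ?_
  · simp only [revPrefix_succ, standardFrame, hc₀, hc₁, hc₂, hc₃]
    simp [revPrefix, funext_iff, Fin.forall_fin_succ]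
  · simp [haffine _ (hpath 1 j (by omega) hj (by omega) (by omega))]

end FourElements

theorem mem_of_no_collinear_triple_general {K V : Type*} [Field K] (hK : Nat.card K = 4)
    [AddCommGroup V] [Module K V] (hV : Module.finrank K V = 3) {n : ℕ} (hn : 3 ≤ n)
    {P : ZMod n → Submodule K V} (hP : ∀ i, Module.finrank K (P i) = 1)
    (h : ∀ i j : ZMod n, j ≠ i → j ≠ i + 1 →
      ¬∃ L : Submodule K V, Module.finrank K L = 2 ∧ P i ≤ L ∧ P (i + 1) ≤ L ∧ P j ≤ L) :
    n ∈ ({3, 4, 5, 6, 8, 9} : Set ℕ) := by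
  obtain rfl | hn := hn.eq_or_lt
  · simp
  have : FiniteDimensional K V := .of_finrank_pos (by omega)
  have hspan (i : ZMod n) : ∃ x, K ∙ x = P i := by
    have := (Submodule.finrank_le_one_iff_isPrincipal (P i)).1 (hP i).le
    exact ⟨_, Submodule.IsPrincipal.span_singleton_generator (P i)⟩
  choose v hv using hspan
  refine mem_of_linearIndependent_cyclic hK hV hn (v := v) fun i j hji hji' =>
    linearIndependent_of_not_exists_finrank_eq_two hV ?_
  simpa only [hv] using h i j hji hji'

/-- If `n ≥ 3` and `P : ℤ/nℤ → ℙ²(𝔽₄)` is such that `P i`, `P (i+1)`, `P j` are never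
collinear for `j ≠ i`, `j ≠ i + 1`, then `n ∈ {3, 4, 5, 6, 8, 9}`. -/
theorem mem_of_no_collinear_triple (n : ℕ) (hn : 3 ≤ n) (P : ZMod n → ProjPoint)
    (h : ∀ i j : ZMod n, j ≠ i → j ≠ i + 1 →
      ¬ Collin3 (P i).1 (P (i + 1)).1 (P j).1) :
    n ∈ ({3, 4, 5, 6, 8, 9} : Set ℕ) :=
  mem_of_no_collinear_triple_general (by simpa using GaloisField.card 2 2 two_ne_zero)
    (by simp) hn (fun i => (P i).2) h
end

section
/- For every n ∈ {3, 4, 5, 6, 8, 9} there exists a map P : ℤ/nℤ → (points of ℙ²(𝔽₄)) such that for all i, j ∈ ℤ/nℤ with j ≠ i and j ≠ i+1, the three points P(i), P(i+1), P(j) are not collinear. -/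
/-!
A hyperoval of `ℙ²(𝔽₄)`, that is, the conic `y² = xz` together with its nucleus, has six points, no
three of them collinear, so any `n ≤ 6` of them can be taken in any cyclic order. For `n = 8` and
`n = 9` the points lie on the sides of the coordinate triangle, and the sequence is invariant under
a permutation of the coordinates of order `2` or `3` respectively; such sequences are found by a
finite search and verified by evaluating the determinants in `𝔽₂[ω]`.
-/

section LinearAlgebra

variable {ι : Type*} [Fintype ι]

theorem card_le_finrank_of_linearIndependent_of_mem {R M : Type*} [Semiring R]
    [StrongRankCondition R] [AddCommMonoid M] [Module R M] {v : ι → M}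
    (hv : LinearIndependent R v) {L : Submodule R M} [Module.Finite R L] (hL : ∀ i, v i ∈ L) :
    Fintype.card ι ≤ Module.finrank R L :=
  LinearIndependent.fintype_card_le_finrank (b := fun i ↦ (⟨v i, hL i⟩ : L))
    (.of_comp L.subtype hv)

variable {K : Type*} [Field K]

theorem linearIndependent_row_iff_det_ne_zero [DecidableEq ι] {A : Matrix ι ι K} :
    LinearIndependent K A.row ↔ A.det ≠ 0 := by
  rw [Matrix.linearIndependent_rows_iff_isUnit, Matrix.isUnit_iff_isUnit_det, isUnit_iff_ne_zero]

theorem linearIndependent_vec3_iff_det_ne_zero {u v w : Fin 3 → K} :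
    LinearIndependent K ![u, v, w] ↔ (Matrix.of ![u, v, w]).det ≠ 0 :=
  linearIndependent_row_iff_det_ne_zero (A := Matrix.of ![u, v, w])

end LinearAlgebra

section CyclicGeneralPosition

/-- A cyclic sequence of vectors in which every two consecutive vectors are linearly independent
together with any third member of the sequence. In `K³`, these are the coordinate vectors of the
cyclic sequences of points in the plane whose sides pass through no further member. -/
def InCyclicGeneralPosition (K : Type*) {V : Type*} [Field K] [AddCommGroup V] [Module K V]
    {n : ℕ} (v : ZMod n → V) : Prop :=
  ∀ i j : ZMod n, j ≠ i → j ≠ i + 1 → LinearIndependent K ![v i, v (i + 1), v j]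

namespace InCyclicGeneralPosition

variable {K L V : Type*} [Field K] [Field L] [AddCommGroup V] [Module K V] {n : ℕ}

theorem iff_det_ne_zero {v : ZMod n → Fin 3 → K} :
    InCyclicGeneralPosition K v ↔
      ∀ i j : ZMod n, j ≠ i → j ≠ i + 1 → (Matrix.of ![v i, v (i + 1), v j]).det ≠ 0 := by
  simp only [InCyclicGeneralPosition, linearIndependent_vec3_iff_det_ne_zero]

theorem map {v : ZMod n → Fin 3 → K} (hv : InCyclicGeneralPosition K v) (f : K →+* L) :
    InCyclicGeneralPosition L fun i ↦ f ∘ v i := by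
  rw [iff_det_ne_zero] at hv ⊢
  intro i j hji hji'
  have hmap : Matrix.of ![f ∘ v i, f ∘ v (i + 1), f ∘ v j] =
      f.mapMatrix (Matrix.of ![v i, v (i + 1), v j]) := by
    ext a b
    fin_cases a <;> rfl
  rw [hmap, ← f.map_det]
  exact (map_ne_zero f).2 (hv i j hji hji')

theorem ne_zero {v : ZMod n → V} (hv : InCyclicGeneralPosition K v) (hn : 2 < n) (i : ZMod n) :
    v i ≠ 0 := by
  have : Fact (2 < n) := ⟨hn⟩
  have : Fact (1 < n) := ⟨by omega⟩
  have hpred : i - 1 ≠ i := by simp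
  have hpred' : i - 1 ≠ i + 1 := fun h ↦ ZMod.neg_one_ne_one (by linear_combination h)
  exact (hv i (i - 1) hpred hpred').ne_zero 0

end InCyclicGeneralPosition

end CyclicGeneralPosition

section Hyperoval

variable {K : Type*} [Field K]

/-- Coordinate vectors of the regular hyperoval in the plane over a field of characteristic two:
the affine points `some (some t)` of the conic `y² = xz`, its point at infinity `some none`, and its
nucleus `none`. -/
def hyperoval : Option (Option K) → Fin 3 → K
  | none => ![0, 1, 0]
  | some none => ![0, 0, 1]
  | some (some t) => ![1, t, t ^ 2]

theorem linearIndependent_hyperoval [CharP K 2] {a b c : Option (Option K)} (hab : a ≠ b)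
    (hac : a ≠ c) (hbc : b ≠ c) :
    LinearIndependent K ![hyperoval a, hyperoval b, hyperoval c] := by
  rw [linearIndependent_vec3_iff_det_ne_zero, Matrix.det_fin_three]
  -- Up to sign the determinants are `1`, differences `s - t`, Vandermonde determinants and, for
  -- two affine points and the nucleus, `s² - t²`, which is nonzero because squaring is injective.
  rcases a with _ | _ | r <;> rcases b with _ | _ | s <;> rcases c with _ | _ | t <;>
    simp only [hyperoval, Matrix.of_apply, Matrix.cons_val, ne_eq, Option.some_inj]
      at hab hac hbc ⊢ <;>
    grind [CharTwo.sq_inj]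

theorem inCyclicGeneralPosition_hyperoval_comp [CharP K 2] {n : ℕ}
    {f : ZMod n → Option (Option K)} (hf : f.Injective) :
    InCyclicGeneralPosition K (hyperoval ∘ f) := by
  intro i j hji hji'
  have : Nontrivial (ZMod n) := ⟨j, i, hji⟩
  have hsucc : i ≠ i + 1 := by simp
  exact linearIndependent_hyperoval (hf.ne hsucc) (hf.ne hji.symm) (hf.ne hji'.symm)

theorem exists_inCyclicGeneralPosition_of_le_card_add_two [CharP K 2] [Finite K] {n : ℕ} [NeZero n]
    (hn : n ≤ Nat.card K + 2) : ∃ v : ZMod n → Fin 3 → K, InCyclicGeneralPosition K v := by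
  have := Fintype.ofFinite K
  have hcard : Fintype.card (ZMod n) ≤ Fintype.card (Option (Option K)) := by
    simpa [ZMod.card] using hn
  obtain ⟨f⟩ := Function.Embedding.nonempty_of_card_le hcard
  exact ⟨hyperoval ∘ f, inCyclicGeneralPosition_hyperoval_comp f.injective⟩

end Hyperoval

section QuadraticF4

/-- The field with four elements as `𝔽₂[ω]`, where `ω² = 1 + ω`. Its arithmetic is computable,
unlike that of `GaloisField 2 2`. -/
abbrev QuadraticF4 : Type := QuadraticAlgebra (ZMod 2) 1 1

open QuadraticAlgebra (omega)

theorem nonempty_quadraticF4_algEquiv : Nonempty (QuadraticF4 ≃ₐ[ZMod 2] F4) := by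
  have hcard : Nat.card QuadraticF4 = 2 ^ 2 := by
    rw [Nat.card_congr (QuadraticAlgebra.equivProd 1 1), Nat.card_prod, Nat.card_zmod, sq]
  exact ⟨GaloisField.algEquivGaloisField 2 2 hcard⟩

/-- Eight points in cyclic general position, with `i ↦ i + 4` reversing the coordinates. -/
def octagon : ZMod 8 → Fin 3 → QuadraticF4 :=
  ![![1, 0, 0], ![0, 1, 1], ![1, 0, omega], ![1, omega ^ 2, 0],
    ![0, 0, 1], ![1, 1, 0], ![omega, 0, 1], ![0, omega ^ 2, 1]]

/-- Nine points in cyclic general position, with `i ↦ i + 3` rotating the coordinates. -/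
def enneagon : ZMod 9 → Fin 3 → QuadraticF4 :=
  ![![1, 0, 0], ![0, 1, 1], ![1, 0, omega],
    ![0, 1, 0], ![1, 0, 1], ![omega, 1, 0],
    ![0, 0, 1], ![1, 1, 0], ![0, omega, 1]]

theorem inCyclicGeneralPosition_octagon : InCyclicGeneralPosition QuadraticF4 octagon := by
  simp only [InCyclicGeneralPosition.iff_det_ne_zero, Matrix.det_fin_three]
  decide +kernel

theorem inCyclicGeneralPosition_enneagon : InCyclicGeneralPosition QuadraticF4 enneagon := by
  simp only [InCyclicGeneralPosition.iff_det_ne_zero, Matrix.det_fin_three]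
  decide +kernel

end QuadraticF4

theorem not_collin3_span_singleton {u v w : V3} (h : LinearIndependent F4 ![u, v, w]) :
    ¬ Collin3 (F4 ∙ u) (F4 ∙ v) (F4 ∙ w) := by
  rintro ⟨L, hL, hu, hv, hw⟩
  rw [Submodule.span_singleton_le_iff_mem] at hu hv hw
  have hmem : ∀ k, ![u, v, w] k ∈ L := by simp [Fin.forall_fin_succ, hu, hv, hw]
  have hcard := card_le_finrank_of_linearIndependent_of_mem h hmem
  simp [hL] at hcard

theorem InCyclicGeneralPosition.exists_not_collin3 {n : ℕ} (hn : 2 < n) {v : ZMod n → V3}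
    (hv : InCyclicGeneralPosition F4 v) :
    ∃ P : ZMod n → ProjPoint, ∀ i j : ZMod n, j ≠ i → j ≠ i + 1 →
      ¬ Collin3 (P i).1 (P (i + 1)).1 (P j).1 :=
  ⟨fun i ↦ ⟨F4 ∙ v i, finrank_span_singleton (hv.ne_zero hn i)⟩,
    fun i j hji hji' ↦ not_collin3_span_singleton (hv i j hji hji')⟩

/-- For every `n ∈ {3, 4, 5, 6, 8, 9}` there is a map `P : ℤ/nℤ → ℙ²(𝔽₄)` such that
`P i`, `P (i+1)`, `P j` are never collinear for `j ≠ i`, `j ≠ i + 1`. -/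
theorem exists_no_collinear_triple :
    ∀ n ∈ ({3, 4, 5, 6, 8, 9} : Set ℕ),
      ∃ P : ZMod n → ProjPoint,
        ∀ i j : ZMod n, j ≠ i → j ≠ i + 1 →
          ¬ Collin3 (P i).1 (P (i + 1)).1 (P j).1 := by
  intro n hn
  simp only [Set.mem_insert_iff, Set.mem_singleton_iff] at hn
  obtain ⟨φ⟩ := nonempty_quadraticF4_algEquiv
  obtain ⟨hn₂, hn₆⟩ | rfl | rfl : (2 < n ∧ n ≤ 6) ∨ n = 8 ∨ n = 9 := by omega
  · have : NeZero n := ⟨by omega⟩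
    have hcard : n ≤ Nat.card F4 + 2 := by rwa [GaloisField.card 2 2 two_ne_zero]
    obtain ⟨v, hv⟩ := exists_inCyclicGeneralPosition_of_le_card_add_two hcard
    exact hv.exists_not_collin3 hn₂
  · exact (inCyclicGeneralPosition_octagon.map (φ : QuadraticF4 →+* F4)).exists_not_collin3
      (by norm_num)
  · exact (inCyclicGeneralPosition_enneagon.map (φ : QuadraticF4 →+* F4)).exists_not_collin3
      (by norm_num)
end

section
/- Let ϱ ∈ 𝔽₄ satisfy ϱ² + ϱ + 1 = 0. Define nine points of ℙ²(𝔽₄), indexed cyclically by ℤ/9ℤ, by P₀ = [0:0:1], P₁ = [ϱ²:0:1], P₂ = [ϱ:1:1], P₃ = [ϱ²:1:1], P₄ = [ϱ:ϱ:1], P₅ = [ϱ²:ϱ:1], P₆ = [ϱ:ϱ²:1], P₇ = [1:ϱ²:1], P₈ = [0:1:0]. Then for all i, j ∈ ℤ/9ℤ with j ≠ i and j ≠ i+1, the three points P(i), P(i+1), P(j) are not collinear. -/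
/-- The nine chosen vectors in `𝔽₄³`, spanning the nine points
`[0:0:1], [ϱ²:0:1], [ϱ:1:1], [ϱ²:1:1], [ϱ:ϱ:1], [ϱ²:ϱ:1], [ϱ:ϱ²:1], [1:ϱ²:1], [0:1:0]`. -/
noncomputable def vecs (ϱ : F4) : ZMod 9 → V3 :=
  ![![0, 0, 1], ![ϱ ^ 2, 0, 1], ![ϱ, 1, 1], ![ϱ ^ 2, 1, 1], ![ϱ, ϱ, 1],
    ![ϱ ^ 2, ϱ, 1], ![ϱ, ϱ ^ 2, 1], ![1, ϱ ^ 2, 1], ![0, 1, 0]]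

/-!
The nine vectors make sense over any commutative ring with a root `ω` of `X² + X + 1`, and they are
the images of a single configuration over the Eisenstein integers `ℤ[ω]`. There the determinant of
two cyclically consecutive vectors and any other one has norm `1`, `3`, `9` or `27`, so it stays
nonzero in every field in which `3 ≠ 0`, in particular in `𝔽₄`.
-/

section LinearAlgebra

variable {n K : Type*} [Fintype n] [DecidableEq n] [Field K]

theorem det_eq_zero_of_row_mem_of_finrank_lt_card {A : Matrix n n K} {L : Submodule K (n → K)}
    (hL : Module.finrank K L < Fintype.card n) (hA : ∀ i, A.row i ∈ L) : A.det = 0 := by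
  by_contra hdet
  have hrows : LinearIndependent K A.row := Matrix.linearIndependent_rows_of_det_ne_zero hdet
  have hspan : Submodule.span K (Set.range A.row) ≤ L :=
    Submodule.span_le.mpr (Set.range_subset_iff.mpr hA)
  have hcard : Fintype.card n ≤ Module.finrank K L :=
    finrank_span_eq_card hrows ▸ Submodule.finrank_mono hspan
  exact hcard.not_gt hL

end LinearAlgebra

section QuadraticAlgebra

variable {R A : Type*} [CommRing R] [Ring A] [Algebra R A] {a b : R}

theorem map_ne_zero_of_algebraMap_norm_ne_zero (f : QuadraticAlgebra R a b →ₐ[R] A)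
    {z : QuadraticAlgebra R a b} (hz : algebraMap R A z.norm ≠ 0) : f z ≠ 0 := by
  rw [← f.commutes, QuadraticAlgebra.algebraMap_norm_eq_mul_star, map_mul] at hz
  exact left_ne_zero_of_mul hz

end QuadraticAlgebra

section NinePoints

variable {R S : Type*} [CommRing R] [CommRing S]

/-- The nine vectors `vecs`, over an arbitrary commutative ring instead of `𝔽₄`. -/
def cycleVec (ω : R) : ZMod 9 → Fin 3 → R :=
  ![![0, 0, 1], ![ω ^ 2, 0, 1], ![ω, 1, 1], ![ω ^ 2, 1, 1], ![ω, ω, 1],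
    ![ω ^ 2, ω, 1], ![ω, ω ^ 2, 1], ![1, ω ^ 2, 1], ![0, 1, 0]]

/-- The matrix whose determinant tests whether the `j`-th point lies on the line joining the
cyclically consecutive points with indices `i` and `i + 1`. -/
def tripleMatrix (ω : R) (i j : ZMod 9) : Matrix (Fin 3) (Fin 3) R :=
  Matrix.of ![cycleVec ω i, cycleVec ω (i + 1), cycleVec ω j]

theorem map_cycleVec (f : R →+* S) (ω : R) (i : ZMod 9) (c : Fin 3) :
    f (cycleVec ω i c) = cycleVec (f ω) i c := by
  change Fin 9 at i
  fin_cases i <;> fin_cases c <;> simp [cycleVec]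

theorem map_tripleMatrix (f : R →+* S) (ω : R) (i j : ZMod 9) :
    (tripleMatrix ω i j).map f = tripleMatrix (f ω) i j := by
  ext r c
  fin_cases r <;> simp [tripleMatrix, map_cycleVec]

theorem map_det_tripleMatrix (f : R →+* S) (ω : R) (i j : ZMod 9) :
    f (tripleMatrix ω i j).det = (tripleMatrix (f ω) i j).det := by
  rw [f.map_det, RingHom.mapMatrix_apply, map_tripleMatrix]

/-- The ring `ℤ[ω]` of Eisenstein integers, presented by `ω² = -1 - ω`. -/
abbrev EisensteinInt : Type := QuadraticAlgebra ℤ (-1) (-1)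

theorem norm_det_tripleMatrix_omega_dvd : ∀ i j : ZMod 9, j ≠ i → j ≠ i + 1 →
    (tripleMatrix (QuadraticAlgebra.omega : EisensteinInt) i j).det.norm ∣ 3 ^ 3 := by
  simp only [Matrix.det_fin_three]
  decide

variable {i j : ZMod 9}

theorem det_tripleMatrix_ne_zero [NoZeroDivisors R] {ω : R} (hω : ω ^ 2 + ω + 1 = 0)
    (h3 : (3 : R) ≠ 0) (hij : j ≠ i) (hij' : j ≠ i + 1) :
    (tripleMatrix ω i j).det ≠ 0 := by
  let f : EisensteinInt →ₐ[ℤ] R :=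
    QuadraticAlgebra.lift ⟨ω, by simp only [neg_smul, one_smul]; linear_combination hω⟩
  have hfω : f QuadraticAlgebra.omega = ω := by simp [f]
  let d : EisensteinInt := (tripleMatrix QuadraticAlgebra.omega i j).det
  have hfd : f d = (tripleMatrix ω i j).det :=
    hfω ▸ map_det_tripleMatrix (f : EisensteinInt →+* R) QuadraticAlgebra.omega i j
  have hdvd : algebraMap ℤ R d.norm ∣ 3 ^ 3 := by
    simpa only [map_pow, map_ofNat] using
      map_dvd (algebraMap ℤ R) (norm_det_tripleMatrix_omega_dvd i j hij hij')
  rw [← hfd]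
  exact map_ne_zero_of_algebraMap_norm_ne_zero f (ne_zero_of_dvd_ne_zero (pow_ne_zero 3 h3) hdvd)

theorem nine_points_no_collinear_triple_general {K : Type*} [Field K] {ω : K}
    (hω : ω ^ 2 + ω + 1 = 0) (h3 : (3 : K) ≠ 0) (hij : j ≠ i) (hij' : j ≠ i + 1) :
    ¬ ∃ L : Submodule K (Fin 3 → K), Module.finrank K L = 2 ∧
      Submodule.span K {cycleVec ω i} ≤ L ∧ Submodule.span K {cycleVec ω (i + 1)} ≤ L ∧
        Submodule.span K {cycleVec ω j} ≤ L := by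
  simp only [Submodule.span_singleton_le_iff_mem]
  rintro ⟨L, hL, hPi, hPi', hPj⟩
  have hrows : ∀ r, (tripleMatrix ω i j).row r ∈ L := by
    intro r
    fin_cases r <;> assumption
  have hdet : (tripleMatrix ω i j).det = 0 :=
    det_eq_zero_of_row_mem_of_finrank_lt_card (by simp [hL]) hrows
  exact det_tripleMatrix_ne_zero hω h3 hij hij' hdet

end NinePoints

/-- The nine points of `ℙ²(𝔽₄)` above, indexed cyclically by `ℤ/9ℤ`, form an 18-cycle:
no `P i`, `P (i+1)`, `P j` with `j ≠ i`, `j ≠ i + 1` are collinear. -/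
theorem nine_points_no_collinear_triple (ϱ : F4) (hϱ : ϱ ^ 2 + ϱ + 1 = 0) :
    ∀ i j : ZMod 9, j ≠ i → j ≠ i + 1 →
      ¬ Collin3 (Submodule.span F4 {vecs ϱ i}) (Submodule.span F4 {vecs ϱ (i + 1)})
        (Submodule.span F4 {vecs ϱ j}) := by
  have h31 : (3 : F4) = 1 := by linear_combination CharTwo.two_eq_zero (R := F4)
  exact fun i j hij hij' =>
    nine_points_no_collinear_triple_general hϱ (h31 ▸ one_ne_zero) hij hij'
end

section
/- The incidence graph of points and lines of ℙ²(𝔽₄) contains no induced subgraph isomorphic to the extended Dynkin diagram D̃₁₄, and no induced subgraph isomorphic to the extended Dynkin diagram D̃₁₈. -/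
/-- The (oriented) edges of the extended Dynkin diagram `D̃ₙ` on `{0, 1, …, n}`:
`{0,2}`, `{1,2}`, `{i,i+1}` for `2 ≤ i ≤ n-3`, `{n-2,n-1}` and `{n-2,n}`. -/
def DTAdj (n : ℕ) (a b : ℕ) : Prop :=
  (a = 0 ∧ b = 2) ∨ (a = 1 ∧ b = 2) ∨ (2 ≤ a ∧ a ≤ n - 3 ∧ b = a + 1) ∨
    (a = n - 2 ∧ b = n - 1) ∨ (a = n - 2 ∧ b = n)

/-- The extended Dynkin diagram `D̃ₙ` as a simple graph on `n + 1` vertices.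
(For `n ≥ 4` the vertices occurring in `DTAdj` are always distinct, so the
`a ≠ b` conjunct is redundant; it merely makes the graph loopless for all `n`.) -/
def DTilde (n : ℕ) : SimpleGraph (Fin (n + 1)) where
  Adj a b := a ≠ b ∧ (DTAdj n a.1 b.1 ∨ DTAdj n b.1 a.1)
  symm := ⟨fun _ _ h => ⟨h.1.symm, h.2.symm⟩⟩
  loopless := ⟨fun _ h => h.1 rfl⟩

/-- A simple graph `G` contains an induced subgraph isomorphic to `H` if there is an
injective map on vertices transporting adjacency in `H` exactly to adjacency in `G`. -/
def HasInducedCopy {α β : Type*} (H : SimpleGraph α) (G : SimpleGraph β) : Prop :=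
  ∃ f : α → β, Function.Injective f ∧ ∀ a b : α, G.Adj (f a) (f b) ↔ H.Adj a b

/-!
Let `n = 4k + 2` with `k ≥ 3`. The even spine vertices `2, 4, …, n - 2` of an induced `D̃ₙ` all lie
on the same side; call them points and their neighbors lines. The point `2` is on five lines, three
of which (`0`, `1` and `3`) contain none of the points `6, 8, …, n - 2`. Two consecutive ones of
these points are joined by an odd spine vertex, which misses `2`, so they lie on different lines
through `2`; with only two lines left, the points alternate between them. In particular the line
joining `2` and `8` contains `n - 2`. By the symmetry `i ↦ n - i`, the line joining `n - 2` and `8`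
contains `4`. These two lines coincide, so the line joining `2` and `4`, which is the vertex `3`,
contains `8`: a contradiction.
-/

theorem eq_of_ne_of_ne_of_encard_le_two {α : Type*} {s : Set α} (hs : s.encard ≤ 2) {x y z : α}
    (hx : x ∈ s) (hy : y ∈ s) (hz : z ∈ s) (hxy : x ≠ y) (hyz : y ≠ z) : x = z := by
  by_contra hxz
  have three_le : ({x, y, z} : Set α).encard ≤ s.encard := Set.encard_le_encard (by grind)
  rw [Set.encard_eq_three.2 ⟨x, y, z, hxy, hxz, hyz, rfl⟩] at three_le
  exact absurd (three_le.trans hs) (by norm_num)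

section Subspaces

open Module

variable {K V : Type*} [Field K] [AddCommGroup V] [Module K V]

theorem finrank_inf_lt_of_ne {A B : Submodule K V} [FiniteDimensional K A] [FiniteDimensional K B]
    (hAB : finrank K A = finrank K B) (hne : A ≠ B) :
    finrank K (A ⊓ B : Submodule K V) < finrank K A :=
  Submodule.finrank_lt_finrank_of_lt
    (inf_lt_left.2 fun hle => hne (Submodule.eq_of_le_of_finrank_eq hle hAB))

theorem existsUnique_line_through_points {P Q : Submodule K V} (hP : finrank K P = 1)
    (hQ : finrank K Q = 1) (hne : P ≠ Q) :
    ∃! L : {L : Submodule K V // finrank K L = 2}, P ≤ L.1 ∧ Q ≤ L.1 := by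
  have := FiniteDimensional.of_finrank_eq_succ hP
  have := FiniteDimensional.of_finrank_eq_succ hQ
  have hlt := finrank_inf_lt_of_ne (hP.trans hQ.symm) hne
  have hsup : finrank K (P ⊔ Q : Submodule K V) = 2 := by
    have := Submodule.finrank_sup_add_finrank_inf_eq P Q
    omega
  refine ⟨⟨P ⊔ Q, hsup⟩, ⟨le_sup_left, le_sup_right⟩, ?_⟩
  rintro ⟨L, hL⟩ ⟨hPL, hQL⟩
  have := FiniteDimensional.of_finrank_eq_succ hL
  exact Subtype.ext
    (Submodule.eq_of_le_of_finrank_eq (sup_le hPL hQL) (hsup.trans hL.symm)).symm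

theorem existsUnique_point_on_lines (hV : finrank K V = 3) {L M : Submodule K V}
    (hL : finrank K L = 2) (hM : finrank K M = 2) (hne : L ≠ M) :
    ∃! P : {P : Submodule K V // finrank K P = 1}, P.1 ≤ L ∧ P.1 ≤ M := by
  have := FiniteDimensional.of_finrank_eq_succ hV
  have hlt := finrank_inf_lt_of_ne (hL.trans hM.symm) hne
  have hinf : finrank K (L ⊓ M : Submodule K V) = 1 := by
    have := Submodule.finrank_sup_add_finrank_inf_eq L M
    have := Submodule.finrank_le (L ⊔ M)
    omega
  refine ⟨⟨L ⊓ M, hinf⟩, ⟨inf_le_left, inf_le_right⟩, ?_⟩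
  rintro ⟨P, hP⟩ ⟨hPL, hPM⟩
  exact Subtype.ext (Submodule.eq_of_le_of_finrank_eq (le_inf hPL hPM) (hP.trans hinf.symm))

theorem encard_finrank_one_of_finrank_two [Finite K] (hV : finrank K V = 2) :
    {P : Submodule K V | finrank K P = 1}.encard = Nat.card K + 1 := by
  have := FiniteDimensional.of_finrank_eq_succ hV
  have : Finite V := Module.finite_of_finite K
  have hcard : ENat.card (Projectivization K V) = Nat.card K + 1 := by
    rw [ENat.card_eq_coe_natCard, Projectivization.card_of_finrank_two K V hV, Nat.cast_add_one]
  rw [← hcard]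
  exact ENat.card_congr (Projectivization.equivSubmodule K V).symm

theorem encard_points_on_line_le [Finite K] {L : Submodule K V} (hL : finrank K L = 2) :
    {P : Submodule K V | finrank K P = 1 ∧ P ≤ L}.encard ≤ Nat.card K + 1 := by
  rw [← encard_finrank_one_of_finrank_two hL]
  refine le_trans (Set.encard_le_encard ?_) (Set.encard_image_le (Submodule.map L.subtype) _)
  rintro P ⟨hP, hPL⟩
  have hmap : (P.submoduleOf L).map L.subtype = P := by
    rw [Submodule.submoduleOf, Submodule.map_comap_subtype, inf_eq_right.2 hPL]
  refine ⟨P.submoduleOf L, ?_, hmap⟩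
  rw [Set.mem_ofPred_eq, ← Submodule.finrank_map_subtype_eq, hmap, hP]

theorem finrank_map_mkQ_add_finrank {P L : Submodule K V} [FiniteDimensional K L] (hPL : P ≤ L) :
    finrank K (L.map P.mkQ) + finrank K P = finrank K L := by
  rw [← (P.mkQ.domRestrict L).finrank_range_add_finrank_ker, LinearMap.range_domRestrict,
    LinearMap.ker_domRestrict, Submodule.ker_mkQ,
    (Submodule.comapSubtypeEquivOfLe hPL).finrank_eq]

theorem encard_lines_through_point_le [Finite K] (hV : finrank K V = 3) {P : Submodule K V}
    (hP : finrank K P = 1) :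
    {L : Submodule K V | finrank K L = 2 ∧ P ≤ L}.encard ≤ Nat.card K + 1 := by
  have := FiniteDimensional.of_finrank_eq_succ hV
  have hquot : finrank K (V ⧸ P) = 2 := by
    have := P.finrank_quotient_add_finrank
    omega
  rw [← encard_finrank_one_of_finrank_two hquot]
  refine le_trans (Set.encard_le_encard ?_) (Set.encard_image_le (Submodule.comap P.mkQ) _)
  rintro L ⟨hL, hPL⟩
  refine ⟨L.map P.mkQ, ?_, by rw [Submodule.comap_map_mkQ, sup_eq_right.2 hPL]⟩
  have := finrank_map_mkQ_add_finrank hPL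
  rw [Set.mem_ofPred_eq]
  omega

end Subspaces

section InducedDTilde

theorem dtAdj_sub_sub_iff {n a b : ℕ} (hn : 4 ≤ n) (ha : a ≤ n) (hb : b ≤ n) :
    DTAdj n (n - a) (n - b) ↔ DTAdj n b a := by
  unfold DTAdj
  omega

/-- The reflection `i ↦ n - i` of the diagram `D̃ₙ`. -/
def DTilde.reflection {n : ℕ} (hn : 4 ≤ n) : DTilde n ≃g DTilde n where
  toEquiv := Fin.revPerm
  map_rel_iff' {a b} := by
    simp only [DTilde, Fin.revPerm_apply, Fin.val_rev, ne_eq, Fin.rev_inj, Nat.add_sub_add_right,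
      dtAdj_sub_sub_iff hn a.is_le b.is_le, dtAdj_sub_sub_iff hn b.is_le a.is_le, or_comm]

/-- The two color classes of `C` are the points and the lines of a possibly degenerate projective
plane with incidence graph `G`: two points are on a unique line and two lines meet in a unique
point. Which class is the class of points is left open, so that the notion is self-dual. -/
def IsPlaneColoring {V : Type*} {G : SimpleGraph V} (C : G.Coloring Bool) : Prop :=
  Pairwise fun u v => C u = C v → ∃! w, G.Adj u w ∧ G.Adj v w

variable {V : Type*} {G : SimpleGraph V}

theorem color_eq_of_common_neighbor (C : G.Coloring Bool) {u v w : V} (hu : G.Adj u w)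
    (hv : G.Adj v w) : C u = C v :=
  (Bool.eq_not.2 (C.valid hu)).trans (Bool.eq_not.2 (C.valid hv)).symm

variable {n : ℕ} (f : DTilde n ↪g G)

theorem adj_embedding_iff {i j : ℕ} (hi : i < n + 1) (hj : j < n + 1) :
    G.Adj (f ⟨i, hi⟩) (f ⟨j, hj⟩) ↔ i ≠ j ∧ (DTAdj n i j ∨ DTAdj n j i) := by
  rw [f.map_adj_iff]
  simp [DTilde]

theorem embedding_ne {i j : ℕ} (hi : i < n + 1) (hj : j < n + 1) (hij : i ≠ j) :
    f ⟨i, hi⟩ ≠ f ⟨j, hj⟩ := by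
  simpa using hij

theorem spine_adj_succ {i : ℕ} (hi : 2 ≤ i) (hin : i + 3 ≤ n) :
    G.Adj (f ⟨i, by omega⟩) (f ⟨i + 1, by omega⟩) := by
  rw [adj_embedding_iff, DTAdj, DTAdj]
  omega

theorem color_spine_add_two (C : G.Coloring Bool) {i : ℕ} (hi : 2 ≤ i) (hin : i + 4 ≤ n) :
    C (f ⟨i, by omega⟩) = C (f ⟨i + 2, by omega⟩) :=
  color_eq_of_common_neighbor C (spine_adj_succ f hi (by omega))
    (spine_adj_succ f (i := i + 1) (by omega) (by omega)).symm

theorem color_spine_even (C : G.Coloring Bool) {i : ℕ} (heven : Even i) (hi : 2 ≤ i)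
    (hin : i + 2 ≤ n) : C (f ⟨2, by omega⟩) = C (f ⟨i, by omega⟩) := by
  obtain ⟨t, rfl⟩ : ∃ t, i = 2 + 2 * t := ⟨i / 2 - 1, by grind⟩
  induction t with
  | zero => rfl
  | succ t ih =>
    exact (ih (by grind) (by omega) (by omega)).trans
      (color_spine_add_two f C (by omega) (by omega))

theorem encard_neighborSet_sdiff_range_le_two (hn : 4 ≤ n)
    (hdeg : (G.neighborSet (f ⟨2, by omega⟩)).encard ≤ 5) :
    (G.neighborSet (f ⟨2, by omega⟩) \ Set.range f).encard ≤ 2 := by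
  let T : Set V := {f ⟨0, by omega⟩, f ⟨1, by omega⟩, f ⟨3, by omega⟩}
  have T_subset_neighborSet : T ⊆ G.neighborSet (f ⟨2, by omega⟩) := by
    rintro _ (rfl | rfl | rfl) <;>
    · rw [SimpleGraph.mem_neighborSet, adj_embedding_iff, DTAdj, DTAdj]
      omega
  have T_subset_range : T ⊆ Set.range f := by
    rintro _ (rfl | rfl | rfl) <;> exact Set.mem_range_self _
  have encard_T : T.encard = 3 :=
    Set.encard_eq_three.2 ⟨_, _, _, embedding_ne f _ _ (by decide),
      embedding_ne f _ _ (by decide), embedding_ne f _ _ (by decide), rfl⟩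
  rw [← Set.encard_sdiff_add_encard_of_subset T_subset_neighborSet, encard_T] at hdeg
  calc (G.neighborSet (f ⟨2, by omega⟩) \ Set.range f).encard
      ≤ (G.neighborSet (f ⟨2, by omega⟩) \ T).encard :=
        Set.encard_le_encard (Set.sdiff_subset_sdiff_right T_subset_range)
    _ ≤ 2 := (ENat.add_le_add_iff_right (k := 3) (by decide)).1 (hdeg.trans (by norm_num))

theorem notMem_range_of_adj_of_adj {i : ℕ} (hi : 5 ≤ i) (hin : i + 2 ≤ n) {w : V}
    (hw : G.Adj (f ⟨2, by omega⟩) w) (hiw : G.Adj (f ⟨i, by omega⟩) w) : w ∉ Set.range f := by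
  rintro ⟨⟨j, hj⟩, rfl⟩
  rw [adj_embedding_iff, DTAdj, DTAdj] at hw hiw
  omega

variable {f} {C : G.Coloring Bool}

theorem IsPlaneColoring.eq_spine_succ (hC : IsPlaneColoring C) {i : ℕ} (hi : 2 ≤ i)
    (hin : i + 4 ≤ n) {w : V} (hw : G.Adj (f ⟨i, by omega⟩) w)
    (hw' : G.Adj (f ⟨i + 2, by omega⟩) w) : w = f ⟨i + 1, by omega⟩ :=
  (hC (embedding_ne f _ _ (by omega)) (color_spine_add_two f C hi hin)).unique ⟨hw, hw'⟩
    ⟨spine_adj_succ f hi (by omega),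
      (spine_adj_succ f (i := i + 1) (by omega) (by omega)).symm⟩

theorem IsPlaneColoring.not_adj_add_two (hC : IsPlaneColoring C) {i : ℕ} (hi : 3 ≤ i)
    (hin : i + 4 ≤ n) {w : V} (hw : G.Adj (f ⟨2, by omega⟩) w)
    (hiw : G.Adj (f ⟨i, by omega⟩) w) : ¬ G.Adj (f ⟨i + 2, by omega⟩) w := by
  intro hw'
  rw [hC.eq_spine_succ (by omega) hin hiw hw', adj_embedding_iff, DTAdj, DTAdj] at hw
  omega

theorem IsPlaneColoring.exists_common_neighbor (hC : IsPlaneColoring C) {i : ℕ} (heven : Even i)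
    (hi : 4 ≤ i) (hin : i + 2 ≤ n) :
    ∃ w, G.Adj (f ⟨2, by omega⟩) w ∧ G.Adj (f ⟨i, by omega⟩) w :=
  (hC (embedding_ne f _ _ (by omega)) (color_spine_even f C heven (by omega) hin)).exists

theorem IsPlaneColoring.adj_add_four (hC : IsPlaneColoring C) {i : ℕ} (heven : Even i)
    (hi : 6 ≤ i) (hin : i + 6 ≤ n) (hdeg : (G.neighborSet (f ⟨2, by omega⟩)).encard ≤ 5) {w : V}
    (hw : G.Adj (f ⟨2, by omega⟩) w) (hiw : G.Adj (f ⟨i, by omega⟩) w) :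
    G.Adj (f ⟨i + 4, by omega⟩) w := by
  obtain ⟨x, hx, hix⟩ := hC.exists_common_neighbor (f := f) (i := i + 2) (by grind) (by omega)
    (by omega)
  obtain ⟨y, hy, hiy⟩ := hC.exists_common_neighbor (f := f) (i := i + 4) (by grind) (by omega)
    (by omega)
  have hwx : w ≠ x := by
    rintro rfl
    exact hC.not_adj_add_two (by omega) (by omega) hw hiw hix
  have hxy : x ≠ y := by
    rintro rfl
    exact hC.not_adj_add_two (by omega) (by omega) hx hix hiy
  have hwy : w = y := eq_of_ne_of_ne_of_encard_le_two
    (encard_neighborSet_sdiff_range_le_two f (by omega) hdeg)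
    ⟨hw, notMem_range_of_adj_of_adj f (by omega) (by omega) hw hiw⟩
    ⟨hx, notMem_range_of_adj_of_adj f (by omega) (by omega) hx hix⟩
    ⟨hy, notMem_range_of_adj_of_adj f (by omega) (by omega) hy hiy⟩ hwx hxy
  rwa [hwy]

theorem IsPlaneColoring.adj_add_four_mul (hC : IsPlaneColoring C) {i : ℕ} (heven : Even i)
    (hi : 6 ≤ i) (t : ℕ) (hin : i + 4 * t + 2 ≤ n)
    (hdeg : (G.neighborSet (f ⟨2, by omega⟩)).encard ≤ 5) {w : V}
    (hw : G.Adj (f ⟨2, by omega⟩) w) (hiw : G.Adj (f ⟨i, by omega⟩) w) :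
    G.Adj (f ⟨i + 4 * t, by omega⟩) w := by
  induction t with
  | zero => exact hiw
  | succ t ih =>
    exact hC.adj_add_four (i := i + 4 * t) (by grind) (by omega) (by omega) hdeg hw
      (ih (by omega) hdeg hw hiw)

theorem no_induced_DTilde_14_18_general (hC : IsPlaneColoring C)
    (hdeg : ∀ v, (G.neighborSet v).encard ≤ 5) (k : ℕ) (hk : 3 ≤ k) :
    ¬ HasInducedCopy (DTilde (4 * k + 2)) G := by
  rintro ⟨f, f_inj, f_adj⟩
  let e : DTilde (4 * k + 2) ↪g G := ⟨⟨f, f_inj⟩, f_adj _ _⟩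
  let e' : DTilde (4 * k + 2) ↪g G := (DTilde.reflection (by omega)).toEmbedding.trans e
  have e'_eq {i j : ℕ} (hij : i + j = 4 * k + 2) : e' ⟨i, by omega⟩ = e ⟨j, by omega⟩ :=
    congrArg e (Fin.ext (by simp [DTilde.reflection]; omega))
  obtain ⟨w, h2, h8⟩ := hC.exists_common_neighbor (f := e) (i := 8) (by decide) (by omega)
    (by omega)
  have hlast : G.Adj (e ⟨4 * k, by omega⟩) w := by
    convert hC.adj_add_four_mul (by decide) (by omega) (k - 2) (by omega) (hdeg _) h2 h8 using 4
    omega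
  have h4 : G.Adj (e ⟨4, by omega⟩) w := by
    rw [← e'_eq (i := 4 * k - 6 + 4) (by omega)]
    refine hC.adj_add_four (by grind) (by omega) (by omega) (hdeg _) ?_ ?_
    · rwa [e'_eq (j := 4 * k) (by omega)]
    · rwa [e'_eq (j := 8) (by omega)]
  rw [hC.eq_spine_succ (by omega) (by omega) h2 h4, adj_embedding_iff, DTAdj, DTAdj] at h8
  omega

end InducedDTilde

section IncGraph

/-- The coloring of the incidence graph in which points are `true` and lines are `false`. -/
def IncGraph.coloring : IncGraph.Coloring Bool :=
  SimpleGraph.Coloring.mk Sum.isLeft (by rintro (p | l) (q | m) h <;> first | exact h.elim | simp)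

theorem IncGraph.isPlaneColoring : IsPlaneColoring IncGraph.coloring := by
  rintro (p | l) (q | m) hne hcolor
  · obtain ⟨l, hl, hunique⟩ := existsUnique_line_through_points p.2 q.2
      fun h => hne (congrArg Sum.inl (Subtype.ext h))
    refine ⟨Sum.inr l, hl, ?_⟩
    rintro (r | m) ⟨hp, hq⟩
    · exact hp.elim
    · exact congrArg Sum.inr (hunique m ⟨hp, hq⟩)
  · cases hcolor
  · cases hcolor
  · obtain ⟨p, hp, hunique⟩ := existsUnique_point_on_lines (by simp) l.2 m.2
      fun h => hne (congrArg Sum.inr (Subtype.ext h))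
    refine ⟨Sum.inl p, hp, ?_⟩
    rintro (q | k) ⟨hl, hm⟩
    · exact congrArg Sum.inl (hunique q ⟨hl, hm⟩)
    · exact hl.elim

theorem IncGraph.encard_neighborSet_le (v : ProjPoint ⊕ ProjLine) :
    (IncGraph.neighborSet v).encard ≤ 5 := by
  have hcard : (Nat.card F4 + 1 : ℕ∞) = 5 := by
    rw [GaloisField.card 2 2 two_ne_zero]
    norm_num
  rw [← hcard]
  rcases v with p | l
  · refine (Set.encard_le_encard_of_injOn (f := Sum.elim Subtype.val Subtype.val) ?_ ?_).trans
      (encard_lines_through_point_le (by simp) p.2)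
    · rintro (q | l) h
      exacts [h.elim, ⟨l.2, h⟩]
    · rintro (q | l) hl (r | m) hm h
      exacts [hl.elim, hl.elim, hm.elim, congrArg Sum.inr (Subtype.ext h)]
  · refine (Set.encard_le_encard_of_injOn (f := Sum.elim Subtype.val Subtype.val) ?_ ?_).trans
      (encard_points_on_line_le l.2)
    · rintro (p | m) h
      exacts [⟨p.2, h⟩, h.elim]
    · rintro (p | m) hp (q | k) hq h
      exacts [congrArg Sum.inl (Subtype.ext h), hq.elim, hp.elim, hp.elim]

end IncGraph

/-- The incidence graph of `ℙ²(𝔽₄)` contains no induced subgraph isomorphic to `D̃₁₄`,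
and none isomorphic to `D̃₁₈`. -/
theorem no_induced_DTilde_14_18 :
    ¬ HasInducedCopy (DTilde 14) IncGraph ∧ ¬ HasInducedCopy (DTilde 18) IncGraph := by
  have key :=
    no_induced_DTilde_14_18_general IncGraph.isPlaneColoring IncGraph.encard_neighborSet_le
  exact ⟨key 3 le_rfl, key 4 (by decide)⟩
end

section
/- On the Weierstrass curve W : y² + xy + t⁴y = x³ over the rational function field F = 𝔽₂(t), the point P = (t², t²) is a nonsingular point of order exactly 6 in the group of points of W; moreover 3P = (t⁴, t⁶) and 4P = (0, 0). -/
/-- The rational function field `F = 𝔽₂(t)`. -/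
noncomputable abbrev F : Type := RatFunc (ZMod 2)

/-- The variable `t` of `𝔽₂(t)`. -/
noncomputable def t : F := RatFunc.X

/-- The Weierstrass curve `W : y² + xy + t⁴y = x³` over `𝔽₂(t)`. -/
noncomputable def W : WeierstrassCurve.Affine F :=
  { a₁ := 1, a₂ := 0, a₃ := t ^ 4, a₄ := 0, a₆ := 0 }

/-!
If `T` has order three and `Q` has order two, then `P = T + Q` has order six, `3P = Q` and `4P = T`.
Here `T = (0, 0)` is a flex with tangent line `y = 0`, and `Q = (t⁴, t⁶)` equals its own negative;
the line `y = t²x` through `T` and `Q` shows that `T + Q = (t², t²)`. In any characteristic, the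
same argument applies to the two-parameter family `y² + axy + m²(a + 2m)y = x³`.
-/

section AddCommMonoid

variable {A : Type*} [AddCommMonoid A] {T Q : A}

lemma addOrderOf_add_eq_six (hT : addOrderOf T = 3) (hQ : addOrderOf Q = 2) :
    addOrderOf (T + Q) = 6 := by
  have hcoprime : (addOrderOf T).Coprime (addOrderOf Q) := by rw [hT, hQ]; norm_num
  rw [(AddCommute.all T Q).addOrderOf_add_eq_mul_addOrderOf_of_coprime hcoprime, hT, hQ]

lemma three_nsmul_add_eq_right (hT : 3 • T = 0) (hQ : 2 • Q = 0) : 3 • (T + Q) = Q :=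
  calc 3 • (T + Q) = 3 • T + 2 • Q + Q := by abel
    _ = Q := by rw [hT, hQ, zero_add, zero_add]

lemma four_nsmul_add_eq_left (hT : 3 • T = 0) (hQ : 2 • Q = 0) : 4 • (T + Q) = T :=
  calc 4 • (T + Q) = 3 • T + 2 • (2 • Q) + T := by abel
    _ = T := by rw [hT, hQ, smul_zero, zero_add, zero_add]

end AddCommMonoid

section WeierstrassCurve

open WeierstrassCurve.Affine

variable {K : Type*} [Field K] [DecidableEq K] {E : WeierstrassCurve.Affine K} {x y : K}

lemma addOrderOf_some_eq_two (h : E.Nonsingular x y) (hy : y = E.negY x y) :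
    addOrderOf (Point.some x y h) = 2 :=
  addOrderOf_eq_prime (by rw [two_nsmul, Point.add_self_of_Y_eq hy]) (Point.some_ne_zero h)

lemma addOrderOf_some_zero_zero (h₂ : E.a₂ = 0) (h₄ : E.a₄ = 0) (h : E.Nonsingular 0 0) :
    addOrderOf (Point.some 0 0 h) = 3 := by
  have h₃ : E.a₃ ≠ 0 := by simpa [h₄] using (nonsingular_zero.1 h).2
  have hy : 0 ≠ E.negY 0 0 := by simpa [negY] using h₃
  have hslope : E.slope 0 0 0 0 = 0 := by simp [slope_of_Y_ne rfl hy, h₄]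
  have hdouble : Point.some 0 0 h + Point.some 0 0 h = -Point.some 0 0 h := by
    rw [Point.add_self_of_Y_ne hy, Point.neg_some, Point.some.injEq, hslope]
    simp [addX, addY, negAddY, negY, h₂]
  refine addOrderOf_eq_prime ?_ (Point.some_ne_zero h)
  rw [succ_nsmul, two_nsmul, hdouble, neg_add_cancel]

end WeierstrassCurve

/-- The family `y² + axy + m²(a + 2m)y = x³` of Weierstrass curves, with the flex `(0, 0)` and
the point `(-m², -m³)` on the line `y = mx`; the coefficient of `y` is chosen to make the latter
equal to its own negative. -/
def sixTorsionCurve {R : Type*} [CommRing R] (a m : R) : WeierstrassCurve.Affine R :=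
  { a₁ := a, a₂ := 0, a₃ := m ^ 2 * (a + 2 * m), a₄ := 0, a₆ := 0 }

namespace sixTorsionCurve

open WeierstrassCurve.Affine

section CommRing

variable {R : Type*} [CommRing R]

lemma negY_neg_sq_neg_cube (a m : R) :
    (sixTorsionCurve a m).negY (-m ^ 2) (-m ^ 3) = -m ^ 3 := by
  simp only [negY, sixTorsionCurve]
  ring

variable [NoZeroDivisors R] {a m : R}

lemma nonsingular_zero_zero (hm : m ≠ 0) (h2 : a + 2 * m ≠ 0) :
    (sixTorsionCurve a m).Nonsingular 0 0 :=
  nonsingular_zero.2 ⟨rfl, .inl (mul_ne_zero (pow_ne_zero 2 hm) h2)⟩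

lemma nonsingular_neg_sq_neg_cube (hm : m ≠ 0) (h3 : a + 3 * m ≠ 0) :
    (sixTorsionCurve a m).Nonsingular (-m ^ 2) (-m ^ 3) := by
  rw [nonsingular_iff, equation_iff]
  simp only [sixTorsionCurve]
  refine ⟨by ring, .inl fun hpartial ↦ mul_ne_zero (pow_ne_zero 3 hm) h3 ?_⟩
  linear_combination -hpartial

end CommRing

section Field

variable {K : Type*} [Field K] [DecidableEq K] {a m : K}

lemma slope_zero_neg_sq (hm : m ≠ 0) :
    (sixTorsionCurve a m).slope 0 (-m ^ 2) 0 (-m ^ 3) = m := by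
  rw [slope_of_X_ne (by simpa using hm)]
  field_simp
  ring

lemma exists_some_eq_some_zero_zero_add (hT : (sixTorsionCurve a m).Nonsingular 0 0)
    (hQ : (sixTorsionCurve a m).Nonsingular (-m ^ 2) (-m ^ 3)) (hm : m ≠ 0) :
    ∃ hP : (sixTorsionCurve a m).Nonsingular (m * (a + 2 * m)) (-m * (a + 2 * m) ^ 2),
      Point.some _ _ hP = Point.some _ _ hT + Point.some _ _ hQ := by
  have hx : 0 ≠ -m ^ 2 := by simpa using hm
  have hX : (sixTorsionCurve a m).addX 0 (-m ^ 2) m = m * (a + 2 * m) := by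
    simp only [addX, sixTorsionCurve]
    ring
  have hY : (sixTorsionCurve a m).addY 0 (-m ^ 2) 0 m = -m * (a + 2 * m) ^ 2 := by
    simp only [addY, negAddY, negY, hX]
    simp only [sixTorsionCurve]
    ring
  have hP := nonsingular_add hT hQ fun h ↦ hx h.1
  simp only [slope_zero_neg_sq hm, hX, hY] at hP
  refine ⟨hP, ?_⟩
  simp only [Point.add_of_X_ne hx, slope_zero_neg_sq hm, hX, hY]

end Field

end sixTorsionCurve

open WeierstrassCurve.Affine in
theorem point_t2_t2_has_order_six_general {K : Type*} [Field K] [DecidableEq K] {a m : K}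
    (hm : m ≠ 0) (h2 : a + 2 * m ≠ 0) (h3 : a + 3 * m ≠ 0) :
    ∃ (hP : (sixTorsionCurve a m).Nonsingular (m * (a + 2 * m)) (-m * (a + 2 * m) ^ 2))
      (hQ : (sixTorsionCurve a m).Nonsingular (-m ^ 2) (-m ^ 3))
      (hT : (sixTorsionCurve a m).Nonsingular 0 0),
      addOrderOf (Point.some _ _ hP) = 6 ∧
        (3 : ℤ) • Point.some _ _ hP = Point.some _ _ hQ ∧
        (4 : ℤ) • Point.some _ _ hP = Point.some _ _ hT := by
  have hT := sixTorsionCurve.nonsingular_zero_zero hm h2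
  have hQ := sixTorsionCurve.nonsingular_neg_sq_neg_cube hm h3
  have orderT := addOrderOf_some_zero_zero rfl rfl hT
  have orderQ := addOrderOf_some_eq_two hQ (sixTorsionCurve.negY_neg_sq_neg_cube a m).symm
  have three_nsmul_T : 3 • Point.some _ _ hT = 0 := addOrderOf_dvd_iff_nsmul_eq_zero.1 orderT.dvd
  have two_nsmul_Q : 2 • Point.some _ _ hQ = 0 := addOrderOf_dvd_iff_nsmul_eq_zero.1 orderQ.dvd
  obtain ⟨hP, hPTQ⟩ := sixTorsionCurve.exists_some_eq_some_zero_zero_add hT hQ hm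
  refine ⟨hP, hQ, hT, ?_⟩
  simp only [hPTQ, ofNat_zsmul]
  exact ⟨addOrderOf_add_eq_six orderT orderQ,
    three_nsmul_add_eq_right three_nsmul_T two_nsmul_Q,
    four_nsmul_add_eq_left three_nsmul_T two_nsmul_Q⟩

lemma ratFunc_X_pow_add_C_ne_zero {R : Type*} [CommRing R] [IsDomain R] {n : ℕ} (hn : 0 < n)
    (c : R) : (RatFunc.X : RatFunc R) ^ n + RatFunc.C c ≠ 0 := by
  simpa using RatFunc.algebraMap_ne_zero (Polynomial.X_pow_add_C_ne_zero hn c)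

lemma W_eq_sixTorsionCurve : W = sixTorsionCurve 1 (t ^ 2) := by
  simp only [W, sixTorsionCurve, CharTwo.two_eq_zero, zero_mul, add_zero, mul_one, ← pow_mul]

lemma one_add_three_mul_t_sq_ne_zero : 1 + 3 * t ^ 2 ≠ 0 := by
  have three_eq_one : (3 : F) = 1 := by
    linear_combination (CharTwo.two_eq_zero : (2 : F) = 0)
  have h : t ^ 2 + RatFunc.C 1 ≠ 0 := ratFunc_X_pow_add_C_ne_zero two_pos 1
  rwa [three_eq_one, one_mul, add_comm, ← map_one RatFunc.C]

open scoped Classical in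
/-- On `W : y² + xy + t⁴y = x³` over `𝔽₂(t)`, the point `P = (t², t²)` is a nonsingular
point of order exactly 6; moreover `3P = (t⁴, t⁶)` and `4P = (0, 0)`. -/
theorem point_t2_t2_has_order_six :
    ∃ (hP : W.Nonsingular (t ^ 2) (t ^ 2)) (h3 : W.Nonsingular (t ^ 4) (t ^ 6))
      (h4 : W.Nonsingular 0 0),
      addOrderOf (WeierstrassCurve.Affine.Point.some _ _ hP) = 6 ∧
        (3 : ℤ) • WeierstrassCurve.Affine.Point.some _ _ hP = WeierstrassCurve.Affine.Point.some _ _ h3 ∧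
        (4 : ℤ) • WeierstrassCurve.Affine.Point.some _ _ hP = WeierstrassCurve.Affine.Point.some _ _ h4 := by
  rw [W_eq_sixTorsionCurve]
  simpa only [CharTwo.two_eq_zero, zero_mul, add_zero, mul_one, one_pow, CharTwo.neg_eq, ← pow_mul]
    using point_t2_t2_has_order_six_general (pow_ne_zero 2 RatFunc.X_ne_zero)
      (by simp [CharTwo.two_eq_zero]) one_add_three_mul_t_sq_ne_zero
end
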